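/- arXiv:2207.08874 — 5 statements merged into one kernel-verified Lean document; each statement's English description precedes it below -/
import Mathlib

section
/- For every integer k ≥ 2 there exists a constant C > 0 such that for all real x ≥ 1 and all real y with 1 ≤ y ≤ x, the number of k-full integers in the interval (x, x + y] satisfies Q_k(x + y) − Q_k(x) ≤ C · y / log(y + 1). -/
/-- A positive integer `n` is `k`-full if every prime dividing `n` does so to at
least the `k`-th power. -/
def IsKFull (k n : ℕ) : Prop := ∀ p : ℕ, p.Prime → p ∣ n → p ^ k ∣ n

open Finset in
theorem kf_crt (a b : ℕ) (hab : Nat.Coprime a b) (ha : 0 < a) (hb : 0 < b) (u v : ℕ → ℝ)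
    (hu : Function.Periodic u a) (hv : Function.Periodic v b) :
    ∑ n ∈ range (a * b), u n * v n = (∑ n ∈ range a, u n) * ∑ n ∈ range b, v n := by
  rw [Finset.sum_mul_sum, ← Finset.sum_product']
  refine Finset.sum_nbij' (fun n => (n % a, n % b))
    (fun q => (Nat.chineseRemainder hab q.1 q.2 : ℕ)) ?_ ?_ ?_ ?_ ?_
  · intro n hn
    simp [Nat.mod_lt, ha, hb]
  · intro q hq
    simpa using Nat.chineseRemainder_lt_mul hab q.1 q.2 ha.ne' hb.ne'
  · intro n hn
    have h1 := Nat.chineseRemainder_modEq_unique hab (a := n % a) (b := n % b) (z := n)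
      (Nat.mod_modEq n a).symm (Nat.mod_modEq n b).symm
    have h2 := Nat.chineseRemainder_lt_mul hab (n % a) (n % b) ha.ne' hb.ne'
    exact (Nat.ModEq.eq_of_lt_of_lt h1 (mem_range.1 hn) h2).symm
  · intro q hq
    have h := (Nat.chineseRemainder hab q.1 q.2).2
    simp only [mem_product, mem_range] at hq
    ext
    · simpa [Nat.ModEq, Nat.mod_eq_of_lt hq.1] using h.1
    · simpa [Nat.ModEq, Nat.mod_eq_of_lt hq.2] using h.2
  · intro n hn
    simp only [hu.map_mod_nat, hv.map_mod_nat]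

open Finset in
theorem kf_prod (s : Finset ℕ) (hs : ∀ p ∈ s, p.Prime) (u : ℕ → ℕ → ℝ)
    (hu : ∀ p ∈ s, Function.Periodic (u p) (p ^ 2)) :
    Function.Periodic (fun n => ∏ p ∈ s, u p n) (∏ p ∈ s, p ^ 2) ∧
    ∑ n ∈ range (∏ p ∈ s, p ^ 2), ∏ p ∈ s, u p n = ∏ p ∈ s, ∑ n ∈ range (p ^ 2), u p n := by
  induction s using Finset.induction_on with
  | empty => simp [Function.Periodic]
  | insert q s hq ih =>
    obtain ⟨ih1, ih2⟩ := ih (fun p hp => hs p (mem_insert_of_mem hp))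
      (fun p hp => hu p (mem_insert_of_mem hp))
    have hqu := hu q (mem_insert_self q s)
    constructor
    · intro n
      simp only [Finset.prod_insert hq]
      congr 1
      · have := hqu.nat_mul (∏ p ∈ s, p ^ 2)
        have h2 := this n
        rw [mul_comm]
        simpa using h2
      · have := ih1.nat_mul (q ^ 2)
        have h2 := this n
        simpa using h2
    · simp only [Finset.prod_insert hq]
      rw [← ih2]
      apply kf_crt
      · apply Nat.Coprime.prod_right
        intro p hp
        apply Nat.Coprime.pow
        rw [Nat.coprime_primes (hs q (mem_insert_self q s)) (hs p (mem_insert_of_mem hp))]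
        rintro rfl
        exact hq hp
      · exact pow_pos (hs q (mem_insert_self q s)).pos 2
      · exact Finset.prod_pos fun p hp => pow_pos (hs p (mem_insert_of_mem hp)).pos 2
      · exact hqu
      · exact ih1

open Finset in
theorem kf_block (F : ℕ → ℝ) (P : ℕ) (hP : 0 < P) (hF : Function.Periodic F P) (μ M : ℝ)
    (hμ : 0 ≤ μ) (hsum : ∑ n ∈ range P, F n = P * μ) (hM : ∀ n, F n ≤ M) (hM0 : 0 ≤ M)
    (m N : ℕ) : ∑ i ∈ range N, F (m + i) ≤ N * μ + P * M := by
  have h1 : ∀ m, ∑ i ∈ range P, F (m + i) = P * μ := by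
    intro m
    induction m with
    | zero => simpa using hsum
    | succ m ih =>
      have e1 := Finset.sum_range_succ (fun i => F (m + i)) P
      have e2 := Finset.sum_range_succ' (fun i => F (m + i)) P
      have e3 : F (m + P) = F m := hF m
      have e4 : ∑ i ∈ range P, F (m + 1 + i) = ∑ i ∈ range P, F (m + (i + 1)) :=
        Finset.sum_congr rfl fun i _ => by congr 1; ring
      simp only [add_zero] at e2
      linarith
  have h2 : ∀ q : ℕ, ∑ i ∈ range (P * q), F (m + i) = q * (P * μ) := by
    intro q
    induction q with
    | zero => simp
    | succ q ih =>
      rw [mul_add, mul_one, Finset.sum_range_add, ih]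
      have := h1 (m + P * q)
      simp only [add_assoc] at this
      rw [this]; push_cast; ring
  have h3 : N = P * (N / P) + N % P := (Nat.div_add_mod N P).symm
  have h4 : ∑ i ∈ range N, F (m + i) = ((N / P : ℕ) : ℝ) * (P * μ)
      + ∑ i ∈ range (N % P), F (m + (P * (N / P) + i)) := by
    conv_lhs => rw [h3]
    rw [Finset.sum_range_add, h2]
  rw [h4]
  have h5 : ((N / P : ℕ) : ℝ) * P ≤ N := by
    exact_mod_cast Nat.div_mul_le_self N P
  have h6 : ∑ i ∈ range (N % P), F (m + (P * (N / P) + i)) ≤ (N % P : ℕ) * M := by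
    have := Finset.sum_le_card_nsmul (range (N % P)) (fun i => F (m + (P * (N / P) + i))) M
      (fun i _ => hM _)
    simpa using this
  have h7 : ((N % P : ℕ) : ℝ) ≤ P := by exact_mod_cast (Nat.mod_lt N hP).le
  have h8 := mul_le_mul_of_nonneg_right h5 hμ
  have h9 := mul_le_mul_of_nonneg_right h7 hM0
  linarith

noncomputable def kfh (p : ℕ) : ℝ := ((p : ℝ) - 1) / ((p : ℝ) ^ 2 - p + 1)

noncomputable def kff (p n : ℕ) : ℝ := if p ∣ n ∧ ¬ p ^ 2 ∣ n then -(1 / kfh p) else 1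

theorem kfh_pos {p : ℕ} (hp : 2 ≤ p) : 0 < kfh p := by
  have : (2 : ℝ) ≤ p := by exact_mod_cast hp
  unfold kfh
  apply div_pos <;> nlinarith

theorem kfh_le_one {p : ℕ} (hp : 2 ≤ p) : kfh p ≤ 1 := by
  have : (2 : ℝ) ≤ p := by exact_mod_cast hp
  unfold kfh
  rw [div_le_one (by nlinarith)]
  nlinarith

theorem kff_abs {p : ℕ} (hp : 2 ≤ p) (n : ℕ) : kfh p * |kff p n| ≤ 1 := by
  have h0 := kfh_pos hp
  unfold kff
  split_ifs
  · rw [abs_neg, abs_of_pos (by positivity)]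
    field_simp; rfl
  · simpa using kfh_le_one hp

theorem kff_periodic (p : ℕ) : Function.Periodic (kff p) (p ^ 2) := by
  intro n
  unfold kff
  have h1 : p ∣ n + p ^ 2 ↔ p ∣ n := (Nat.dvd_add_left (dvd_pow_self p two_ne_zero))
  have h2 : p ^ 2 ∣ n + p ^ 2 ↔ p ^ 2 ∣ n := (Nat.dvd_add_left dvd_rfl)
  simp only [h1, h2]

open Finset in
theorem kf_count {p : ℕ} (hp : 2 ≤ p) (c : ℝ) :
    ∑ n ∈ range (p ^ 2), (if p ∣ n ∧ ¬ p ^ 2 ∣ n then c else 1)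
      = ((p : ℝ) - 1) * c + ((p : ℝ) ^ 2 - p + 1) := by
  have hc : ((range (p ^ 2)).filter (fun n => p ∣ n ∧ ¬ p ^ 2 ∣ n)).card = p - 1 := by
    have : (range (p ^ 2)).filter (fun n => p ∣ n ∧ ¬ p ^ 2 ∣ n)
        = (Ico 1 p).image (fun j => p * j) := by
      ext n
      simp only [mem_filter, mem_range, mem_image, mem_Ico]
      constructor
      · rintro ⟨h1, ⟨j, rfl⟩, h3⟩
        refine ⟨j, ⟨?_, ?_⟩, rfl⟩
        · rcases Nat.eq_zero_or_pos j with rfl | h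
          · simp at h3
          · exact h
        · rw [pow_two] at h1
          exact Nat.lt_of_mul_lt_mul_left h1
      · rintro ⟨j, ⟨h1, h2⟩, rfl⟩
        have hlt : p * j < p ^ 2 := by
          rw [pow_two]; exact Nat.mul_lt_mul_of_pos_left h2 (by omega)
        refine ⟨hlt, dvd_mul_right _ _, fun h => ?_⟩
        have := Nat.le_of_dvd (Nat.mul_pos (by omega) h1) h
        omega
    rw [this, Finset.card_image_of_injective, Nat.card_Ico]
    intro a b hab
    exact Nat.eq_of_mul_eq_mul_left (by omega) hab
  have e : ∀ n, (if p ∣ n ∧ ¬ p ^ 2 ∣ n then c else 1)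
      = 1 + (if p ∣ n ∧ ¬ p ^ 2 ∣ n then c - 1 else 0) := by
    intro n; split_ifs <;> ring
  rw [Finset.sum_congr rfl fun n _ => e n, Finset.sum_add_distrib, ← Finset.sum_filter,
    Finset.sum_const, Finset.sum_const, hc, card_range]
  simp only [nsmul_eq_mul]
  rw [Nat.cast_sub (by omega)]
  push_cast; ring

open Finset in
theorem kff_sum {p : ℕ} (hp : 2 ≤ p) : ∑ n ∈ range (p ^ 2), kff p n = 0 := by
  have h2 : (2 : ℝ) ≤ p := by exact_mod_cast hp
  unfold kff
  rw [kf_count hp]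
  unfold kfh
  have : (p : ℝ) - 1 ≠ 0 := by linarith
  field_simp
  ring

open Finset in
theorem kff_sum_sq {p : ℕ} (hp : 2 ≤ p) :
    ∑ n ∈ range (p ^ 2), kff p n * kff p n = (p : ℝ) ^ 2 * (1 / kfh p) := by
  have h2 : (2 : ℝ) ≤ p := by exact_mod_cast hp
  have e : ∀ n, kff p n * kff p n = if p ∣ n ∧ ¬ p ^ 2 ∣ n then (1 / kfh p) * (1 / kfh p) else 1 := by
    intro n; unfold kff; split_ifs <;> ring
  rw [Finset.sum_congr rfl fun n _ => e n, kf_count hp]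
  unfold kfh
  have h3 : (p : ℝ) - 1 ≠ 0 := by linarith
  have h4 : (p : ℝ) ^ 2 - p + 1 ≠ 0 := by nlinarith
  field_simp
  ring

/-- Weighted block sum of a correlation. -/
theorem kf_pair (A B : Finset ℕ) (hA : ∀ p ∈ A, p.Prime) (hB : ∀ p ∈ B, p.Prime) (R : ℕ)
    (hAR : ∏ p ∈ A, p ≤ R) (hBR : ∏ p ∈ B, p ≤ R) (m N : ℕ) :
    ∑ i ∈ Finset.range N, ((∏ p ∈ A, kfh p * kff p (m + i)) * (∏ p ∈ B, kfh p * kff p (m + i)))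
      ≤ N * (if A = B then ∏ p ∈ A, kfh p else 0) + (R : ℝ) ^ 4 := by
  classical
  set s := A ∪ B with hs
  have hsp : ∀ p ∈ s, p.Prime := by
    intro p hp
    rcases Finset.mem_union.1 hp with h | h
    · exact hA p h
    · exact hB p h
  let u : ℕ → ℕ → ℝ := fun p n =>
    (if p ∈ A then kfh p * kff p n else 1) * (if p ∈ B then kfh p * kff p n else 1)
  have hF : ∀ n, (∏ p ∈ A, kfh p * kff p n) * (∏ p ∈ B, kfh p * kff p n) = ∏ p ∈ s, u p n := by
    intro n
    simp only [u]
    rw [Finset.prod_mul_distrib (s := s), Finset.prod_ite_mem, Finset.prod_ite_mem,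
      Finset.inter_eq_right.2 Finset.subset_union_left,
      Finset.inter_eq_right.2 Finset.subset_union_right]
  have hu : ∀ p ∈ s, Function.Periodic (u p) (p ^ 2) := by
    intro p _ n
    simp only [u, kff_periodic p n]
  obtain ⟨hper, hsum⟩ := kf_prod s hsp u hu
  have hbd : ∀ n, ∏ p ∈ s, u p n ≤ 1 := by
    intro n
    refine (le_abs_self _).trans ?_
    rw [Finset.abs_prod]
    apply Finset.prod_le_one
    · intros; positivity
    · intro p hp
      have h2 := (hsp p hp).two_le
      have h3 : |kfh p * kff p n| ≤ 1 := by
        rw [abs_mul, abs_of_pos (kfh_pos h2)]; exact kff_abs h2 n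
      simp only [u, abs_mul (ite _ _ _)]
      apply mul_le_one₀ _ (abs_nonneg _) _
      · split_ifs
        · exact h3
        · simp
      · split_ifs
        · exact h3
        · simp
  have hPle : ∏ p ∈ s, p ^ 2 ≤ R ^ 4 := by
    have h1 : ∏ p ∈ s, p ≤ (∏ p ∈ A, p) * ∏ p ∈ B, p := by
      rw [← Finset.prod_union_inter]
      apply Nat.le_mul_of_pos_right
      exact Finset.prod_pos fun p hp => (hA p (Finset.mem_inter.1 hp).1).pos
    rw [Finset.prod_pow]
    calc (∏ p ∈ s, p) ^ 2 ≤ (R * R) ^ 2 :=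
          Nat.pow_le_pow_left (h1.trans (Nat.mul_le_mul hAR hBR)) 2
      _ = R ^ 4 := by ring
  have hPpos : 0 < ∏ p ∈ s, p ^ 2 := Finset.prod_pos fun p hp => pow_pos (hsp p hp).pos 2
  have hmu : 0 ≤ (if A = B then ∏ p ∈ A, kfh p else 0) := by
    split_ifs
    · exact Finset.prod_nonneg fun p hp => (kfh_pos (hA p hp).two_le).le
    · exact le_rfl
  have hmean : ∑ n ∈ Finset.range (∏ p ∈ s, p ^ 2), ∏ p ∈ s, u p n
      = ((∏ p ∈ s, p ^ 2 : ℕ) : ℝ) * (if A = B then ∏ p ∈ A, kfh p else 0) := by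
    rw [hsum]
    split_ifs with hab
    · subst hab
      have hsA : s = A := by simp [hs]
      rw [hsA]
      push_cast
      rw [← Finset.prod_mul_distrib]
      apply Finset.prod_congr rfl
      intro p hp
      have h2 := (hA p hp).two_le
      have h0 := kfh_pos h2
      have e : ∀ n, u p n = kfh p ^ 2 * (kff p n * kff p n) := by
        intro n; simp only [u, hp, if_true]; ring
      simp only [e]
      rw [← Finset.mul_sum, kff_sum_sq h2]
      field_simp
    · rw [mul_zero]
      have : ∃ p ∈ s, ¬ (p ∈ A ↔ p ∈ B) := by
        by_contra! hcon
        apply hab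
        ext p
        by_cases hp : p ∈ s
        · exact hcon p hp
        · rw [hs, Finset.mem_union] at hp; tauto
      obtain ⟨p, hp, hne⟩ := this
      apply Finset.prod_eq_zero hp
      have e : ∀ n, u p n = kfh p * kff p n := by
        intro n
        simp only [u]
        by_cases h1 : p ∈ A <;> by_cases h2 : p ∈ B <;> simp [h1, h2] <;> tauto
      simp only [e]
      rw [← Finset.mul_sum, kff_sum (hsp p hp).two_le, mul_zero]
  have hfin := kf_block (fun n => ∏ p ∈ s, u p n) _ hPpos hper _ 1 hmu hmean hbd zero_le_one m N
  simp only [hF]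
  refine hfin.trans ?_
  have : ((∏ p ∈ s, p ^ 2 : ℕ) : ℝ) ≤ (R : ℝ) ^ 4 := by exact_mod_cast hPle
  linarith

open Finset in
theorem kf_prodbound (N : ℕ) (hN : 2 ≤ N) :
    (1 / 3 : ℝ) * (N / (N - 1)) ≤ ∏ n ∈ Icc 2 N, (1 - 1 / ((n : ℝ) ^ 2 - n + 1)) := by
  induction N, hN using Nat.le_induction with
  | base => norm_num
  | succ n hn ih =>
    have h2 : (2 : ℝ) ≤ n := by exact_mod_cast hn
    rw [Finset.prod_Icc_succ_top (by omega)]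
    have h3 : (1 : ℝ) - 1 / (n : ℝ) ^ 2 ≤ 1 - 1 / (((n + 1 : ℕ) : ℝ) ^ 2 - (n + 1 : ℕ) + 1) := by
      push_cast
      apply sub_le_sub_left
      apply one_div_le_one_div_of_le
      · positivity
      · nlinarith
    have h4 : (0 : ℝ) ≤ 1 - 1 / (n : ℝ) ^ 2 := by
      rw [sub_nonneg, div_le_one (by positivity)]; nlinarith
    have h5 : (0 : ℝ) ≤ (1 / 3 : ℝ) * (n / (n - 1)) := by
      have : (0 : ℝ) ≤ (n : ℝ) - 1 := by linarith
      positivity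
    refine le_trans (le_of_eq ?_) (mul_le_mul ih h3 h4 (h5.trans ih))
    have : (n : ℝ) - 1 ≠ 0 := by linarith
    push_cast
    rw [add_sub_cancel_right]
    field_simp
    ring

theorem kf_h_lower (A : Finset ℕ) (hA : ∀ p ∈ A, p.Prime) :
    (1 / 3 : ℝ) * (1 / ((∏ p ∈ A, p : ℕ) : ℝ)) ≤ ∏ p ∈ A, kfh p := by
  have e : ∏ p ∈ A, kfh p
      = (∏ p ∈ A, (1 - 1 / ((p : ℝ) ^ 2 - p + 1))) * (1 / ((∏ p ∈ A, p : ℕ) : ℝ)) := by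
    push_cast
    rw [one_div, ← Finset.prod_inv_distrib, ← Finset.prod_mul_distrib]
    apply Finset.prod_congr rfl
    intro p hp
    have h2 : (2 : ℝ) ≤ p := by exact_mod_cast (hA p hp).two_le
    have h4 : (p : ℝ) ^ 2 - p + 1 ≠ 0 := by nlinarith
    have h5 : (p : ℝ) ≠ 0 := by linarith
    unfold kfh
    rw [one_sub_div h4, ← div_eq_mul_inv, div_div, div_eq_div_iff h4 (mul_ne_zero h4 h5)]
    ring
  rw [e]
  apply mul_le_mul_of_nonneg_right _ (by positivity)
  set N := max 2 (A.sup id) with hN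
  have hN2 : 2 ≤ N := le_max_left _ _
  have hsub : A ⊆ Finset.Icc 2 N := by
    intro p hp
    rw [Finset.mem_Icc]
    exact ⟨(hA p hp).two_le, (Finset.le_sup (f := id) hp).trans (le_max_right _ _)⟩
  have hterm : ∀ n ∈ Finset.Icc 2 N, (0 : ℝ) ≤ 1 - 1 / ((n : ℝ) ^ 2 - n + 1) ∧
      (1 : ℝ) - 1 / ((n : ℝ) ^ 2 - n + 1) ≤ 1 := by
    intro n hn
    have h2 : (2 : ℝ) ≤ n := by exact_mod_cast (Finset.mem_Icc.1 hn).1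
    have h4 : (1 : ℝ) ≤ (n : ℝ) ^ 2 - n + 1 := by nlinarith
    constructor
    · rw [sub_nonneg, div_le_one (by linarith)]; exact h4
    · have : (0 : ℝ) ≤ 1 / ((n : ℝ) ^ 2 - n + 1) := by positivity
      linarith
  have h1 : ∏ n ∈ Finset.Icc 2 N, (1 - 1 / ((n : ℝ) ^ 2 - n + 1))
      ≤ ∏ p ∈ A, (1 - 1 / ((p : ℝ) ^ 2 - p + 1)) := by
    rw [← Finset.prod_sdiff hsub]
    apply mul_le_of_le_one_left
    · exact Finset.prod_nonneg fun p hp => (hterm p (hsub hp)).1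
    · exact Finset.prod_le_one (fun p hp => (hterm p (Finset.mem_sdiff.1 hp).1).1)
        (fun p hp => (hterm p (Finset.mem_sdiff.1 hp).1).2)
  refine le_trans ?_ ((kf_prodbound N hN2).trans h1)
  have h2 : (2 : ℝ) ≤ N := by exact_mod_cast hN2
  have : (1 : ℝ) ≤ N / (N - 1) := by
    rw [le_div_iff₀ (by linarith)]; linarith
  linarith

open Finset in
theorem kf_sq_sum (R : ℕ) : ∑ m ∈ Icc 1 R, (1 : ℝ) / (m : ℝ) ^ 2 ≤ 2 := by
  have : ∀ R : ℕ, 1 ≤ R → ∑ m ∈ Icc 1 R, (1 : ℝ) / (m : ℝ) ^ 2 ≤ 2 - 1 / R := by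
    intro R hR
    induction R, hR using Nat.le_induction with
    | base => norm_num
    | succ n hn ih =>
      rw [Finset.sum_Icc_succ_top (by omega)]
      have h1 : (1 : ℝ) ≤ n := by exact_mod_cast hn
      have : (1 : ℝ) / ((n + 1 : ℕ) : ℝ) ^ 2 ≤ 1 / n - 1 / ((n + 1 : ℕ) : ℝ) := by
        push_cast
        rw [div_sub_div _ _ (by positivity) (by positivity),
          div_le_div_iff₀ (by positivity) (by positivity)]
        nlinarith
      linarith
  rcases Nat.eq_zero_or_pos R with rfl | h
  · simp
  · have h1 := this R h
    have : (0 : ℝ) ≤ 1 / R := by positivity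
    linarith

open Finset in
theorem kf_sqfree_sum (R : ℕ) :
    Real.log (R + 1) / 2 ≤ ∑ d ∈ (Icc 1 R).filter Squarefree, (1 : ℝ) / d := by
  have h1 : Real.log (R + 1) ≤ ∑ n ∈ Icc 1 R, (1 : ℝ) / n := by
    have := log_add_one_le_harmonic R
    rw [harmonic_eq_sum_Icc] at this
    push_cast at this
    simpa using this
  have h2 : ∑ n ∈ Icc 1 R, (1 : ℝ) / n
      ≤ (∑ d ∈ (Icc 1 R).filter Squarefree, (1 : ℝ) / d) * ∑ m ∈ Icc 1 R, (1 : ℝ) / (m : ℝ) ^ 2 := by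
    rw [Finset.sum_mul_sum, ← Finset.sum_product']
    have hex : ∀ n : ℕ, ∃ q : ℕ × ℕ, q.2 ^ 2 * q.1 = n ∧ Squarefree q.1 := by
      intro n
      obtain ⟨a, b, h, h'⟩ := Nat.sq_mul_squarefree n
      exact ⟨(a, b), h, h'⟩
    choose φ hφ1 hφ2 using hex
    have hinj : Set.InjOn φ (Icc 1 R : Finset ℕ) := by
      intro a _ b _ hab
      rw [← hφ1 a, ← hφ1 b, hab]
    have e : ∑ n ∈ Icc 1 R, (1 : ℝ) / n
        = ∑ q ∈ (Icc 1 R).image φ, (1 : ℝ) / q.1 * (1 / (q.2 : ℝ) ^ 2) := by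
      rw [Finset.sum_image hinj]
      apply Finset.sum_congr rfl
      intro n _
      conv_lhs => rw [← hφ1 n]
      push_cast
      rw [one_div_mul_one_div, mul_comm]
    rw [e]
    apply Finset.sum_le_sum_of_subset_of_nonneg
    · intro q hq
      obtain ⟨n, hn, rfl⟩ := Finset.mem_image.1 hq
      rw [mem_Icc] at hn
      have h1 := hφ1 n
      have ha : 0 < (φ n).1 := Nat.pos_of_ne_zero fun h => by rw [h] at h1; omega
      have hb : 0 < (φ n).2 := Nat.pos_of_ne_zero fun h => by rw [h] at h1; omega
      simp only [mem_product, mem_filter, mem_Icc]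
      refine ⟨⟨⟨ha, ?_⟩, hφ2 n⟩, hb, ?_⟩
      · nlinarith [Nat.pow_le_pow_left hb 2]
      · nlinarith [Nat.pow_le_pow_left hb 2]
    · intros; positivity
  have h3 := kf_sq_sum R
  have h4 : 0 ≤ ∑ d ∈ (Icc 1 R).filter Squarefree, (1 : ℝ) / d :=
    Finset.sum_nonneg fun _ _ => by positivity
  nlinarith

open Finset in
theorem kf_sieve (R m N : ℕ) (hR : 1 ≤ R) (E : Finset ℕ) (hE : E ⊆ range N)
    (hfull : ∀ i ∈ E, ∀ p : ℕ, p.Prime → p ∣ m + i → p ^ 2 ∣ m + i) :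
    ∃ S : ℝ, 1 ≤ S ∧ Real.log (R + 1) / 6 ≤ S ∧ (E.card : ℝ) * S ^ 2 ≤ N * S + (R : ℝ) ^ 6 := by
  classical
  set D := (Icc 1 R).filter Squarefree with hD
  have hpr : ∀ d : ℕ, ∀ p ∈ d.primeFactors, p.Prime := fun d p hp => Nat.prime_of_mem_primeFactors hp
  have hprod : ∀ d ∈ D, ∏ p ∈ d.primeFactors, p = d := fun d hd =>
    Nat.prod_primeFactors_of_squarefree (mem_filter.1 hd).2
  let h : ℕ → ℝ := fun d => ∏ p ∈ d.primeFactors, kfh p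
  have hpos : ∀ d, 0 ≤ h d := fun d =>
    Finset.prod_nonneg fun p hp => (kfh_pos (hpr d p hp).two_le).le
  refine ⟨∑ d ∈ D, h d, ?_, ?_, ?_⟩
  · have : h 1 ≤ ∑ d ∈ D, h d := Finset.single_le_sum (fun d _ => hpos d) (by simp [hD, hR])
    simpa [h] using this
  · have h1 := kf_sqfree_sum R
    have h2 : (1 / 3 : ℝ) * ∑ d ∈ D, (1 : ℝ) / d ≤ ∑ d ∈ D, h d := by
      rw [Finset.mul_sum]
      apply Finset.sum_le_sum
      intro d hd
      have := kf_h_lower d.primeFactors (hpr d)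
      rwa [hprod d hd] at this
    rw [← hD] at h1
    linarith
  · let W : ℕ → ℝ := fun i => ∑ d ∈ D, ∏ p ∈ d.primeFactors, kfh p * kff p (m + i)
    have hW : ∀ i ∈ E, W i = ∑ d ∈ D, h d := by
      intro i hi
      apply Finset.sum_congr rfl
      intro d _
      apply Finset.prod_congr rfl
      intro p hp
      have : kff p (m + i) = 1 := by
        unfold kff
        rw [if_neg]
        rintro ⟨h1, h2⟩
        exact h2 (hfull i hi p (hpr d p hp) h1)
      rw [this, mul_one]
    have hc : (D.card : ℝ) ≤ R := by
      have : D.card ≤ R := by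
        simpa using Finset.card_filter_le (Icc 1 R) Squarefree
      exact_mod_cast this
    calc (E.card : ℝ) * (∑ d ∈ D, h d) ^ 2 = ∑ i ∈ E, W i ^ 2 := by
          have hh : ∀ i ∈ E, W i ^ 2 = (∑ d ∈ D, h d) ^ 2 := fun i hi => by rw [hW i hi]
          rw [Finset.sum_congr rfl hh, Finset.sum_const, nsmul_eq_mul]
      _ ≤ ∑ i ∈ range N, W i ^ 2 :=
          Finset.sum_le_sum_of_subset_of_nonneg hE fun _ _ _ => sq_nonneg _
      _ = ∑ d ∈ D, ∑ e ∈ D, ∑ i ∈ range N,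
            ((∏ p ∈ d.primeFactors, kfh p * kff p (m + i)) *
              (∏ p ∈ e.primeFactors, kfh p * kff p (m + i))) := by
          simp only [W, pow_two, Finset.sum_mul_sum]
          rw [Finset.sum_comm]
          apply Finset.sum_congr rfl
          intro d _
          rw [Finset.sum_comm]
      _ ≤ ∑ d ∈ D, ∑ e ∈ D, ((N : ℝ) * (if d = e then h d else 0) + (R : ℝ) ^ 4) := by
          apply Finset.sum_le_sum
          intro d hd
          apply Finset.sum_le_sum
          intro e he
          have := kf_pair d.primeFactors e.primeFactors (hpr d) (hpr e) R
            (by rw [hprod d hd]; exact (mem_Icc.1 (mem_filter.1 hd).1).2)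
            (by rw [hprod e he]; exact (mem_Icc.1 (mem_filter.1 he).1).2) m N
          have hiff : d.primeFactors = e.primeFactors ↔ d = e := by
            constructor
            · intro hh
              rw [← hprod d hd, ← hprod e he, hh]
            · rintro rfl; rfl
          simpa only [hiff] using this
      _ = N * (∑ d ∈ D, h d) + (D.card : ℝ) * D.card * (R : ℝ) ^ 4 := by
          simp only [Finset.sum_add_distrib, ← Finset.mul_sum, Finset.sum_const, nsmul_eq_mul]
          congr 1
          · congr 1
            apply Finset.sum_congr rfl
            intro d hd
            simp [hd]
          · ring
      _ ≤ N * (∑ d ∈ D, h d) + (R : ℝ) ^ 6 := by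
          have : (D.card : ℝ) * D.card * (R : ℝ) ^ 4 ≤ R * R * (R : ℝ) ^ 4 := by gcongr
          nlinarith

/-- For every integer `k ≥ 2` there is a constant `C > 0` such that for all real
`x ≥ 1` and `1 ≤ y ≤ x`, the number of `k`-full integers in `(x, x + y]` is at
most `C · y / log (y + 1)`. -/
theorem kfull_short_interval_bound (k : ℕ) (hk : 2 ≤ k) :
    ∃ C : ℝ, 0 < C ∧ ∀ x y : ℝ, 1 ≤ x → 1 ≤ y → y ≤ x →
      (({n : ℕ | x < (n : ℝ) ∧ (n : ℝ) ≤ x + y ∧ 0 < n ∧ IsKFull k n}.ncard : ℝ))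
        ≤ C * y / Real.log (y + 1) := by
  classical
  refine ⟨126, by norm_num, ?_⟩
  intro x y hx hy hyx
  set R := ⌊y ^ ((1 : ℝ) / 6)⌋₊ with hRdef
  set m := ⌊x⌋₊ + 1 with hm
  set N := ⌊x + y⌋₊ - ⌊x⌋₊ with hN
  have hr1 : (1 : ℝ) ≤ y ^ ((1 : ℝ) / 6) := Real.one_le_rpow hy (by norm_num)
  have hr6 : (y ^ ((1 : ℝ) / 6)) ^ 6 = y := by
    rw [← Real.rpow_natCast, ← Real.rpow_mul (by linarith)]
    norm_num
  have hR1 : 1 ≤ R := Nat.le_floor (by simpa using hr1)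
  have hRle : (R : ℝ) ≤ y ^ ((1 : ℝ) / 6) := Nat.floor_le (by linarith)
  have hRlt : y ^ ((1 : ℝ) / 6) < R + 1 := Nat.lt_floor_add_one _
  have hR6 : (R : ℝ) ^ 6 ≤ y := by
    rw [← hr6]; gcongr
  have hyR : y ≤ ((R : ℝ) + 1) ^ 6 := by
    rw [← hr6]; gcongr
  have hR1' : (1 : ℝ) ≤ R := by exact_mod_cast hR1
  have hlog : Real.log (y + 1) ≤ 7 * Real.log (R + 1) := by
    have : y + 1 ≤ ((R : ℝ) + 1) ^ 7 := by
      have h2 : 2 * ((R : ℝ) + 1) ^ 6 ≤ ((R : ℝ) + 1) ^ 7 := by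
        rw [pow_succ _ 6, mul_comm]
        gcongr
        linarith
      linarith
    calc Real.log (y + 1) ≤ Real.log (((R : ℝ) + 1) ^ 7) := Real.log_le_log (by linarith) this
      _ = 7 * Real.log (R + 1) := by rw [Real.log_pow]; norm_num
  have hlogpos : 0 < Real.log (y + 1) := Real.log_pos (by linarith)
  have hNy : (N : ℝ) ≤ 2 * y := by
    have h1 : ⌊x⌋₊ ≤ ⌊x + y⌋₊ := Nat.floor_mono (by linarith)
    rw [hN, Nat.cast_sub h1]
    have h2 : (⌊x + y⌋₊ : ℝ) ≤ x + y := Nat.floor_le (by linarith)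
    have h3 : x < ⌊x⌋₊ + 1 := Nat.lt_floor_add_one x
    linarith
  let E := (Finset.range N).filter (fun i => IsKFull k (m + i))
  have hset : {n : ℕ | x < (n : ℝ) ∧ (n : ℝ) ≤ x + y ∧ 0 < n ∧ IsKFull k n}
      ⊆ ((E.image (fun i => m + i) : Finset ℕ) : Set ℕ) := by
    rintro n ⟨h1, h2, h3, h4⟩
    have h5 : ⌊x⌋₊ < n := (Nat.floor_lt (by linarith)).2 h1
    have h6 : n ≤ ⌊x + y⌋₊ := Nat.le_floor h2
    have h7 : m + (n - m) = n := by omega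
    rw [Finset.mem_coe, Finset.mem_image]
    refine ⟨n - m, ?_, h7⟩
    simp only [E, Finset.mem_filter, Finset.mem_range, h7]
    exact ⟨by omega, h4⟩
  have hcard : {n : ℕ | x < (n : ℝ) ∧ (n : ℝ) ≤ x + y ∧ 0 < n ∧ IsKFull k n}.ncard ≤ E.card := by
    refine (Set.ncard_le_ncard hset (Finset.finite_toSet _)).trans ?_
    rw [Set.ncard_coe_finset]
    exact Finset.card_image_le
  obtain ⟨S, hS1, hSlog, hS⟩ := kf_sieve R m N hR1 E (Finset.filter_subset _ _) (by
    intro i hi p hp hd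
    exact (pow_dvd_pow p hk).trans ((Finset.mem_filter.1 hi).2 p hp hd))
  have hcard' : ({n : ℕ | x < (n : ℝ) ∧ (n : ℝ) ≤ x + y ∧ 0 < n ∧ IsKFull k n}.ncard : ℝ)
      ≤ E.card := by exact_mod_cast hcard
  refine hcard'.trans ?_
  have hES : (E.card : ℝ) * S ≤ 3 * y := by
    have h1 : (E.card : ℝ) * S * S ≤ 3 * y * S := by
      have h2 : (N : ℝ) * S ≤ 2 * y * S := by gcongr
      have h3 : y ≤ y * S := le_mul_of_one_le_right (by linarith) hS1
      nlinarith
    exact le_of_mul_le_mul_right h1 (by linarith)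
  rw [le_div_iff₀ hlogpos]
  have h42 : Real.log (y + 1) ≤ 42 * S := by linarith
  have h43 : (E.card : ℝ) * Real.log (y + 1) ≤ E.card * (42 * S) := by gcongr
  linarith
end

section
/- For every real α with 0 < α < 1 there exists a constant C = C(α) > 0 such that for all real x ≥ 1, all real y with 1 ≤ y ≤ x, and all integers q, r with q ≥ 1, gcd(r, q) = 1 and q ≤ y^{1−α}, the number of squarefull integers n with x < n ≤ x + y and n ≡ r (mod q) is at most C · y / (φ(q) · log(y + 1)). -/
/-- A positive integer `n` is squarefull if every prime dividing `n` does so to at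
least the second power. -/
def IsSquarefull (n : ℕ) : Prop := ∀ p : ℕ, p.Prime → p ∣ n → p ^ 2 ∣ n

open Finset

lemma sf_sum_zmod (M : ℕ) [NeZero M] (f : ℕ → ℝ) :
    ∑ k ∈ range M, f k = ∑ a : ZMod M, f a.val := by
  cases M with
  | zero => exact absurd rfl (NeZero.ne 0)
  | succ m => exact (Fin.sum_univ_eq_sum_range f (m+1)).symm

lemma sf_sum_affine (M : ℕ) (hM : 0 < M) (f : ℕ → ℝ) (hf : Function.Periodic f M) (c q : ℕ)
    (hq : Nat.Coprime q M) :
    ∑ k ∈ range M, f (c + q * k) = ∑ k ∈ range M, f k := by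
  have : NeZero M := ⟨hM.ne'⟩
  rw [sf_sum_zmod M f, sf_sum_zmod M (fun k => f (c + q * k))]
  have h1 : ∀ a : ZMod M, f (c + q * a.val) = f ((c + q * a : ZMod M).val) := by
    intro a
    have : (c + q * a : ZMod M) = ((c + q * a.val : ℕ) : ZMod M) := by
      push_cast; simp
    rw [this, ZMod.val_natCast, hf.map_mod_nat]
  simp_rw [h1]
  have hinj : Function.Injective (fun a : ZMod M => (c + q * a : ZMod M)) := by
    intro a b hab
    have h2 : (q : ZMod M) * a = q * b := by simpa using hab
    have hu : IsUnit (q : ZMod M) := (ZMod.isUnit_iff_coprime q M).2 hq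
    exact hu.mul_left_cancel h2
  exact (Finite.injective_iff_bijective.1 hinj).sum_comp (fun a : ZMod M => f a.val)

lemma sf_sum_range_mul (A B : ℕ) (F : ℕ → ℝ) :
    ∑ k ∈ range (A * B), F k = ∑ i ∈ range A, ∑ j ∈ range B, F (i + A * j) := by
  rw [Finset.sum_comm]
  induction B with
  | zero => simp
  | succ b ih =>
    rw [Nat.mul_succ, Finset.sum_range_add, ih, Finset.sum_range_succ]
    simp_rw [add_comm]

lemma sf_crt (A B : ℕ) (hB : 0 < B) (f g : ℕ → ℝ) (hf : Function.Periodic f A)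
    (hg : Function.Periodic g B) (hAB : Nat.Coprime A B) :
    ∑ k ∈ range (A * B), f k * g k = (∑ k ∈ range A, f k) * ∑ k ∈ range B, g k := by
  rw [sf_sum_range_mul, Finset.sum_mul]
  refine Finset.sum_congr rfl fun i _ => ?_
  rw [← sf_sum_affine B hB g hg i A hAB, Finset.mul_sum]
  refine Finset.sum_congr rfl fun j _ => ?_
  congr 1
  have := hf.nat_mul j i
  simpa [mul_comm] using this

lemma sf_prod_periodic (s : Finset ℕ) (f : ℕ → ℕ → ℝ)
    (hf : ∀ p ∈ s, Function.Periodic (f p) (p ^ 2)) :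
    Function.Periodic (fun n => ∏ p ∈ s, f p n) (∏ p ∈ s, p ^ 2) := by
  intro n
  refine Finset.prod_congr rfl fun p hp => ?_
  obtain ⟨t, ht⟩ := Finset.dvd_prod_of_mem (fun p => p ^ 2) hp
  rw [ht]
  have := (hf p hp).nat_mul t n
  simpa [mul_comm] using this

lemma sf_crt_prod (s : Finset ℕ) (hs : ∀ p ∈ s, p.Prime) (f : ℕ → ℕ → ℝ)
    (hf : ∀ p ∈ s, Function.Periodic (f p) (p ^ 2)) :
    ∑ k ∈ range (∏ p ∈ s, p ^ 2), ∏ p ∈ s, f p k = ∏ p ∈ s, ∑ k ∈ range (p ^ 2), f p k := by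
  induction s using Finset.induction_on with
  | empty => simp
  | insert a s ha ih =>
    have hs' : ∀ p ∈ s, p.Prime := fun p hp => hs p (Finset.mem_insert_of_mem hp)
    have hf' : ∀ p ∈ s, Function.Periodic (f p) (p ^ 2) :=
      fun p hp => hf p (Finset.mem_insert_of_mem hp)
    have hpa := hs a (Finset.mem_insert_self _ _)
    rw [Finset.prod_insert ha, Finset.prod_insert ha, ← ih hs' hf']
    simp_rw [Finset.prod_insert ha]
    refine sf_crt _ _ (Finset.prod_pos fun p hp => pow_pos (hs' p hp).pos 2) _ _
      (hf a (Finset.mem_insert_self _ _)) (sf_prod_periodic s f hf') ?_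
    refine Nat.Coprime.prod_right fun p hp => ?_
    refine Nat.Coprime.pow _ _ ((Nat.coprime_primes hpa (hs' p hp)).2 ?_)
    rintro rfl; exact ha hp

lemma sf_interval (M : ℕ) (hM : 0 < M) (f : ℕ → ℝ) (hf : Function.Periodic f M) (B : ℝ)
    (hB : ∀ n, |f n| ≤ B) (q : ℕ) (hq : Nat.Coprime q M) (K c : ℕ) :
    ∑ k ∈ range K, f (c + q * k) ≤ K / M * (∑ k ∈ range M, f k) + 2 * (M * B) := by
  have hMr : (0 : ℝ) < M := by exact_mod_cast hM
  have hB0 : 0 ≤ B := (abs_nonneg _).trans (hB 0)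
  induction K using Nat.strong_induction_on generalizing c with
  | _ K ih =>
    by_cases hK : K < M
    · have hKr : (K : ℝ) ≤ M := by exact_mod_cast hK.le
      have h1 : ∑ k ∈ range K, f (c + q * k) ≤ M * B := by
        calc _ ≤ ∑ k ∈ range K, B := Finset.sum_le_sum fun k _ => (abs_le.1 (hB _)).2
          _ = K * B := by simp
          _ ≤ _ := by gcongr
      have h2 : -(M * B) ≤ ∑ k ∈ range M, f k := by
        calc -(M * B) = ∑ k ∈ range M, (-B) := by simp
          _ ≤ _ := Finset.sum_le_sum fun k _ => (abs_le.1 (hB _)).1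
      have h3 : -(M * B) ≤ K / M * (∑ k ∈ range M, f k) := by
        have h4 : (K : ℝ) / M ≤ 1 := (div_le_one hMr).2 hKr
        have h5 : (0:ℝ) ≤ K / M := by positivity
        have h6 : 0 ≤ M * B := by positivity
        nlinarith
      linarith
    · push Not at hK
      obtain ⟨L, rfl⟩ := Nat.exists_eq_add_of_le hK
      rw [Finset.sum_range_add, sf_sum_affine M hM f hf c q hq]
      have := ih L (by omega) (c + q * M)
      have h7 : ∀ k, f (c + q * (M + k)) = f (c + q * M + q * k) := fun k => by ring_nf
      simp_rw [h7]
      push_cast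
      rw [add_div, div_self hMr.ne', add_mul, one_mul]
      linarith

lemma sf_S_lower (q : ℕ) (hq : 1 ≤ q) (z : ℕ) :
    Real.log (z + 1) ≤ (q / Nat.totient q : ℝ) * (2 *
      ∑ d ∈ (Icc 1 z).filter (fun d => Squarefree d ∧ Nat.Coprime d q), (1 / d : ℝ)) := by
  classical
  set D := (Icc 1 z).filter (fun d => Squarefree d ∧ Nat.Coprime d q) with hD
  have key : ∀ n ∈ Icc 1 z, ∃ t : ℕ × ℕ × ℕ, t.1 * (t.2.1 ^ 2 * t.2.2) = n ∧
      t.1 ∈ Nat.factoredNumbers q.primeFactors ∧ t.2.1 ∈ Icc 1 z ∧ t.2.2 ∈ D := by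
    intro n hn
    rw [Finset.mem_Icc] at hn
    have hn0 : n ≠ 0 := by omega
    obtain ⟨e, he⟩ : n.gcd (q ^ n) ∣ n := Nat.gcd_dvd_left _ _
    have he0 : e ≠ 0 := by rintro rfl; simp at he; omega
    have hm0 : n.gcd (q ^ n) ≠ 0 := by
      intro h; rw [h] at he; simp at he; omega
    have hcop : Nat.Coprime e q := by
      rw [Nat.coprime_iff_gcd_eq_one]
      by_contra hne
      obtain ⟨p, hp, hpd⟩ := Nat.exists_prime_and_dvd hne
      have hpe := hpd.trans (Nat.gcd_dvd_left _ _)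
      have hpq := hpd.trans (Nat.gcd_dvd_right _ _)
      have h1 : p ^ (n.factorization p) ∣ n.gcd (q ^ n) := by
        refine Nat.dvd_gcd (Nat.ordProj_dvd n p) ?_
        refine (pow_dvd_pow_of_dvd hpq _).trans (pow_dvd_pow _ ?_)
        exact (Nat.factorization_lt p hn0).le
      have h2 : p ^ (n.factorization p + 1) ∣ n := by
        rw [pow_succ]; conv_rhs => rw [he]
        exact mul_dvd_mul h1 hpe
      exact Nat.pow_succ_factorization_not_dvd hn0 hp h2
    obtain ⟨a, b, hab, ha⟩ := Nat.sq_mul_squarefree e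
    have ha0 : a ≠ 0 := ha.ne_zero
    have hb0 : b ≠ 0 := by rintro rfl; simp at hab; omega
    have hen : e ≤ z := (Nat.le_of_dvd (by omega) (Dvd.intro_left _ he.symm)).trans hn.2
    have hale : a ≤ e := Nat.le_of_dvd (by omega) (Dvd.intro_left _ hab)
    have hble : b ≤ e := Nat.le_of_dvd (by omega)
      ((dvd_pow_self b two_ne_zero).trans (Dvd.intro _ hab))
    refine ⟨(n.gcd (q ^ n), b, a), ?_, ?_, ?_, ?_⟩
    · simp only [hab]; exact he.symm
    · rw [Nat.mem_factoredNumbers_iff_forall_le]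
      refine ⟨hm0, fun p _ hp hpd => ?_⟩
      rw [Nat.mem_primeFactors]
      exact ⟨hp, hp.dvd_of_dvd_pow (hpd.trans (Nat.gcd_dvd_right _ _)), by omega⟩
    · simp only [Finset.mem_Icc]; omega
    · simp only [hD, Finset.mem_filter, Finset.mem_Icc]
      refine ⟨by omega, ha, Nat.Coprime.coprime_dvd_left (Dvd.intro_left _ hab) hcop⟩
  choose! t ht using key
  set T := (Icc 1 z).image (fun n => (t n).1) with hT
  have hinj : Set.InjOn t (Icc 1 z : Finset ℕ) := by
    intro a ha b hb hab
    rw [← (ht a ha).1, ← (ht b hb).1, hab]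
  have h1 : Real.log (z + 1) ≤ ∑ n ∈ Icc 1 z, (1 / n : ℝ) := by
    have := log_add_one_le_harmonic z
    rw [harmonic_eq_sum_Icc] at this
    push_cast at this
    simpa using this
  have h2 : ∑ n ∈ Icc 1 z, (1 / n : ℝ) ≤
      ∑ u ∈ T ×ˢ (Icc 1 z ×ˢ D), (1 / u.1 : ℝ) * ((1 / (u.2.1 : ℝ) ^ 2) * (1 / u.2.2 : ℝ)) := by
    have : ∑ n ∈ Icc 1 z, (1 / n : ℝ) = ∑ u ∈ (Icc 1 z).image t,
        (1 / u.1 : ℝ) * ((1 / (u.2.1 : ℝ) ^ 2) * (1 / u.2.2 : ℝ)) := by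
      rw [Finset.sum_image hinj]
      refine Finset.sum_congr rfl fun n hn => ?_
      conv_lhs => rw [← (ht n hn).1]
      push_cast
      simp only [one_div, mul_inv]
    rw [this]
    refine Finset.sum_le_sum_of_subset_of_nonneg ?_ fun _ _ _ => by positivity
    intro u hu
    obtain ⟨n, hn, rfl⟩ := Finset.mem_image.1 hu
    simp only [Finset.mem_product]
    exact ⟨Finset.mem_image_of_mem _ hn, (ht n hn).2.2.1, (ht n hn).2.2.2⟩
  have h3 : ∑ k ∈ Icc 1 z, (1 / (k : ℝ) ^ 2) ≤ 2 := by
    have := sum_Ioo_inv_sq_le (α := ℝ) 0 (z + 1)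
    have e : Ioo 0 (z + 1) = Icc 1 z := by ext; simp; omega
    rw [e] at this
    simpa using this
  have h4 : ∑ m ∈ T, (1 / m : ℝ) ≤ q / Nat.totient q := by
    let f : ℕ →* ℝ := ⟨⟨fun n => (1 / n : ℝ), by simp⟩, fun a b => by
      simp only [Nat.cast_mul]; field_simp⟩
    have hE := (EulerProduct.summable_and_hasSum_factoredNumbers_prod_filter_prime_geometric
      (f := f) (by
        intro p hp
        have : (1 : ℝ) < p := by exact_mod_cast hp.one_lt
        show ‖(1 / p : ℝ)‖ < 1
        rw [Real.norm_of_nonneg (by positivity), div_lt_one (by positivity)]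
        exact this) q.primeFactors).2
    have hP : (∏ p ∈ q.primeFactors with p.Prime, (1 - f p)⁻¹) = (q / Nat.totient q : ℝ) := by
      rw [Finset.filter_true_of_mem (fun p hp => Nat.prime_of_mem_primeFactors hp)]
      have := Nat.totient_eq_mul_prod_factors q
      have h' : (Nat.totient q : ℝ) = q * ∏ p ∈ q.primeFactors, (1 - (p : ℝ)⁻¹) := by
        have := congrArg (fun x : ℚ => (x : ℝ)) this
        push_cast at this
        exact this
      have hq0 : (q : ℝ) ≠ 0 := by positivity
      rw [h', Finset.prod_inv_distrib, div_mul_eq_div_div, div_self hq0, one_div]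
      congr 1
      refine Finset.prod_congr rfl fun p _ => ?_
      show 1 - (1 / p : ℝ) = _
      simp
    rw [hP] at hE
    have hE' := (hasSum_subtype_iff_indicator (f := fun m : ℕ => f m)).1 hE
    refine le_trans (le_of_eq ?_) (sum_le_hasSum T (fun i _ => ?_) hE')
    · refine Finset.sum_congr rfl fun m hm => ?_
      obtain ⟨n, hn, rfl⟩ := Finset.mem_image.1 hm
      rw [Set.indicator_of_mem (ht n hn).2.1]
      rfl
    · refine Set.indicator_nonneg (fun m _ => ?_) i
      show (0:ℝ) ≤ 1 / m
      positivity
  refine h1.trans (h2.trans ?_)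
  rw [Finset.sum_product]
  simp_rw [← Finset.mul_sum]
  rw [Finset.sum_product]
  simp_rw [← Finset.mul_sum]
  rw [← Finset.sum_mul, ← Finset.sum_mul]
  have : 0 ≤ ∑ d ∈ D, (1 / d : ℝ) := Finset.sum_nonneg fun _ _ => by positivity
  gcongr

/-- Local sieve weight: mean zero modulo `p ^ 2`, equal to `1` unless `p` exactly divides `n`. -/
noncomputable def sfh (p n : ℕ) : ℝ :=
  1 - ((p : ℝ) ^ 2 / (p - 1)) * (if p ∣ n ∧ ¬ p ^ 2 ∣ n then 1 else 0)

/-- Product of the local weights over the primes dividing `d`. -/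
noncomputable def sfH (d n : ℕ) : ℝ := ∏ p ∈ d.primeFactors, sfh p n

lemma sfh_periodic (p : ℕ) : Function.Periodic (sfh p) (p ^ 2) := by
  intro n
  have h1 : p ∣ n + p ^ 2 ↔ p ∣ n := (Nat.dvd_add_iff_left (dvd_pow_self p two_ne_zero)).symm
  have h2 : p ^ 2 ∣ n + p ^ 2 ↔ p ^ 2 ∣ n := (Nat.dvd_add_iff_left dvd_rfl).symm
  simp only [sfh, h1, h2]

lemma sfh_count (p : ℕ) (hp : p.Prime) :
    ∑ k ∈ range (p ^ 2), (if p ∣ k ∧ ¬ p ^ 2 ∣ k then 1 else 0 : ℝ) = p - 1 := by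
  have h : (range (p ^ 2)).filter (fun k => p ∣ k ∧ ¬ p ^ 2 ∣ k) = (Ico 1 p).image (p * ·) := by
    ext k
    simp only [Finset.mem_filter, Finset.mem_range, Finset.mem_image, Finset.mem_Ico]
    constructor
    · rintro ⟨hk, ⟨j, rfl⟩, hn⟩
      refine ⟨j, ⟨?_, ?_⟩, rfl⟩
      · rcases Nat.eq_zero_or_pos j with rfl | h
        · simp at hn
        · exact h
      · rw [pow_two] at hk; exact lt_of_mul_lt_mul_left hk (Nat.zero_le _)
    · rintro ⟨j, ⟨h1, h2⟩, rfl⟩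
      refine ⟨?_, Dvd.intro _ rfl, ?_⟩
      · rw [pow_two]; exact Nat.mul_lt_mul_of_pos_left h2 hp.pos
      · rw [pow_two]; intro h
        have := Nat.dvd_of_mul_dvd_mul_left hp.pos h
        exact absurd (Nat.le_of_dvd (by omega) this) (by omega)
  rw [Finset.sum_boole, h, Finset.card_image_of_injective _ (mul_right_injective₀ hp.ne_zero)]
  simp [Nat.cast_sub hp.one_le]

lemma sfh_sum (p : ℕ) (hp : p.Prime) : ∑ k ∈ range (p ^ 2), sfh p k = 0 := by
  have h1 : (1 : ℝ) < p := by exact_mod_cast hp.one_lt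
  have h2 : (p : ℝ) - 1 ≠ 0 := by linarith
  simp only [sfh]
  rw [Finset.sum_sub_distrib, ← Finset.mul_sum, sfh_count p hp]
  simp
  field_simp
  ring

lemma sfh_sum_sq (p : ℕ) (hp : p.Prime) :
    ∑ k ∈ range (p ^ 2), sfh p k * sfh p k = (p : ℝ) ^ 2 * (p * (1 + 1 / (p * (p - 1)))) := by
  have h1 : (1 : ℝ) < p := by exact_mod_cast hp.one_lt
  have h2 : (p : ℝ) - 1 ≠ 0 := by linarith
  have h3 : ∀ k, sfh p k * sfh p k = 1 + (((p : ℝ) ^ 2 / (p - 1)) ^ 2 - 2 * ((p : ℝ) ^ 2 / (p - 1)))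
      * (if p ∣ k ∧ ¬ p ^ 2 ∣ k then 1 else 0) := by
    intro k
    simp only [sfh]
    split_ifs <;> ring
  simp_rw [h3]
  rw [Finset.sum_add_distrib, ← Finset.mul_sum, sfh_count p hp]
  simp
  field_simp
  ring

lemma sfh_abs (p n : ℕ) (hp : p.Prime) : |sfh p n| ≤ (p : ℝ) ^ 2 := by
  have h1 : (2 : ℝ) ≤ p := by exact_mod_cast hp.two_le
  have h2 : (0 : ℝ) < (p : ℝ) - 1 := by linarith
  have h3 : (p : ℝ) ^ 2 / (p - 1) ≤ p ^ 2 := div_le_self (by positivity) (by linarith)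
  have h4 : 0 ≤ (p : ℝ) ^ 2 / (p - 1) := by positivity
  have h5 : 1 ≤ (p : ℝ) ^ 2 := by nlinarith
  simp only [sfh]
  rw [abs_le]
  split_ifs <;> constructor <;> linarith

lemma sfH_abs (d n : ℕ) (hd : d ≠ 0) : |sfH d n| ≤ (d : ℝ) ^ 2 := by
  rw [sfH, Finset.abs_prod]
  calc _ ≤ ∏ p ∈ d.primeFactors, (p : ℝ) ^ 2 :=
        Finset.prod_le_prod (fun _ _ => abs_nonneg _)
          fun p hp => sfh_abs p n (Nat.prime_of_mem_primeFactors hp)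
    _ = ((∏ p ∈ d.primeFactors, p : ℕ) : ℝ) ^ 2 := by rw [Finset.prod_pow]; push_cast; rfl
    _ ≤ _ := by
        gcongr
        exact Nat.le_of_dvd (Nat.pos_of_ne_zero hd) (Nat.prod_primeFactors_dvd d)

lemma sfH_squarefull (d n : ℕ) (hn : ∀ p : ℕ, p.Prime → p ∣ n → p ^ 2 ∣ n) : sfH d n = 1 := by
  rw [sfH]
  refine Finset.prod_eq_one fun p hp => ?_
  have hp' := Nat.prime_of_mem_primeFactors hp
  rw [sfh, if_neg]
  · simp
  · rintro ⟨h1, h2⟩; exact h2 (hn p hp' h1)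

lemma sf_prod_bound (d : ℕ) (hd : Squarefree d) :
    ∏ p ∈ d.primeFactors, ((p : ℝ) * (1 + 1 / (p * (p - 1)))) ≤ d * Real.exp 1 := by
  rw [Finset.prod_mul_distrib]
  have h0 : ∏ p ∈ d.primeFactors, (p : ℝ) = d := by
    have h := congrArg (Nat.cast (R := ℝ)) (Nat.prod_primeFactors_of_squarefree hd)
    push_cast at h
    exact h
  rw [h0]
  gcongr
  have hpos : ∀ p : ℕ, (0 : ℝ) ≤ 1 / (p * (p - 1)) := by
    intro p
    rcases Nat.eq_zero_or_pos p with rfl | h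
    · simp
    · have : (1 : ℝ) ≤ p := by exact_mod_cast h
      have : (0 : ℝ) ≤ (p : ℝ) - 1 := by linarith
      positivity
  calc _ ≤ ∏ p ∈ d.primeFactors, Real.exp (1 / (p * (p - 1))) := by
        refine Finset.prod_le_prod (fun p _ => by linarith [hpos p]) fun p _ => ?_
        linarith [Real.add_one_le_exp (1 / ((p : ℝ) * (p - 1)))]
    _ = Real.exp (∑ p ∈ d.primeFactors, 1 / ((p : ℝ) * (p - 1))) := (Real.exp_sum _ _).symm
    _ ≤ _ := by
      rw [Real.exp_le_exp]
      have hsub : d.primeFactors ⊆ Ico 2 (d + 2) := by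
        intro p hp
        have := (Nat.prime_of_mem_primeFactors hp).two_le
        have := Nat.le_of_mem_primeFactors hp
        simp only [Finset.mem_Ico]; omega
      refine (Finset.sum_le_sum_of_subset_of_nonneg hsub fun p _ _ => hpos p).trans ?_
      have : ∀ m : ℕ, ∑ p ∈ Ico 2 (m + 2), 1 / ((p : ℝ) * (p - 1)) = 1 - 1 / (m + 1) := by
        intro m
        induction m with
        | zero => simp
        | succ m ih =>
          rw [show m + 1 + 2 = (m + 2) + 1 by ring, Finset.sum_Ico_succ_top (by omega), ih]
          push_cast
          have h1 : (m : ℝ) + 1 ≠ 0 := by positivity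
          have h2 : (m : ℝ) + 2 ≠ 0 := by positivity
          have h3 : (m : ℝ) + 1 + 1 ≠ 0 := by positivity
          have h4 : (m : ℝ) + 2 - 1 ≠ 0 := by ring_nf; positivity
          field_simp
          ring
      rw [this]
      have : (0 : ℝ) ≤ 1 / ((d : ℝ) + 1) := by positivity
      linarith

lemma sf_pair (q z K c d e : ℕ) (hd : d ≤ z) (he : e ≤ z) (hds : Squarefree d)
    (hes : Squarefree e) (hdq : Nat.Coprime d q) (heq : Nat.Coprime e q) :
    ∑ k ∈ range K, sfH d (c + q * k) * sfH e (c + q * k) ≤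
      (if d = e then K * (d * Real.exp 1) else 0) + 2 * (z : ℝ) ^ 8 := by
  classical
  set s := d.primeFactors ∪ e.primeFactors with hs
  let f : ℕ → ℕ → ℝ := fun p n =>
    (if p ∈ d.primeFactors then sfh p n else 1) * (if p ∈ e.primeFactors then sfh p n else 1)
  have hsp : ∀ p ∈ s, p.Prime := by
    intro p hp
    rcases Finset.mem_union.1 hp with h | h <;> exact Nat.prime_of_mem_primeFactors h
  have hf : ∀ p ∈ s, Function.Periodic (f p) (p ^ 2) := by
    intro p _ n
    simp only [f, sfh_periodic p n]
  have hprod : ∀ n, sfH d n * sfH e n = ∏ p ∈ s, f p n := by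
    intro n
    simp only [f, Finset.prod_mul_distrib, sfH]
    rw [Finset.prod_ite_mem, Finset.prod_ite_mem, Finset.inter_eq_right.2 Finset.subset_union_left,
      Finset.inter_eq_right.2 Finset.subset_union_right]
  set M := ∏ p ∈ s, p ^ 2 with hM
  have hMpos : 0 < M := Finset.prod_pos fun p hp => pow_pos (hsp p hp).pos 2
  have hMr : (0 : ℝ) < M := by exact_mod_cast hMpos
  have hMdvd : M ∣ (d * e) ^ 2 := by
    rw [hM, Finset.prod_pow]
    refine pow_dvd_pow_of_dvd ?_ 2
    rw [hs, ← Nat.primeFactors_mul hds.ne_zero hes.ne_zero]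
    exact Nat.prod_primeFactors_dvd _
  have hd0 := hds.ne_zero
  have he0 := hes.ne_zero
  have hdr : (d : ℝ) ≤ z := by exact_mod_cast hd
  have her : (e : ℝ) ≤ z := by exact_mod_cast he
  have hMle : (M : ℝ) ≤ (z : ℝ) ^ 4 := by
    have h1 : M ≤ (d * e) ^ 2 := Nat.le_of_dvd (by positivity) hMdvd
    calc (M : ℝ) ≤ ((d : ℝ) * e) ^ 2 := by exact_mod_cast h1
      _ ≤ ((z : ℝ) * z) ^ 2 := by gcongr
      _ = _ := by ring
  have hcop : Nat.Coprime q M := by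
    refine Nat.Coprime.coprime_dvd_right hMdvd ?_
    exact Nat.Coprime.pow_right 2 (Nat.Coprime.mul_right hdq.symm heq.symm)
  have hbd : ∀ n, |∏ p ∈ s, f p n| ≤ (z : ℝ) ^ 4 := by
    intro n
    rw [← hprod, abs_mul]
    calc _ ≤ (d : ℝ) ^ 2 * (e : ℝ) ^ 2 := by
          gcongr
          · exact sfH_abs d n hd0
          · exact sfH_abs e n he0
      _ ≤ (z : ℝ) ^ 2 * (z : ℝ) ^ 2 := by gcongr
      _ = _ := by ring
  have main := sf_interval M hMpos _ (sf_prod_periodic s f hf) _ hbd q hcop K c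
  simp_rw [hprod]
  refine main.trans ?_
  rw [sf_crt_prod s hsp f hf]
  refine add_le_add ?_ ?_
  · split_ifs with hde
    · subst hde
      have hs' : s = d.primeFactors := by simp [hs]
      have : ∏ p ∈ s, ∑ k ∈ range (p ^ 2), f p k ≤ M * (d * Real.exp 1) := by
        calc _ = ∏ p ∈ s, (((p : ℝ) ^ 2) * (p * (1 + 1 / (p * (p - 1))))) := by
              refine Finset.prod_congr rfl fun p hp => ?_
              rw [← sfh_sum_sq p (hsp p hp)]
              refine Finset.sum_congr rfl fun k _ => ?_
              rw [hs'] at hp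
              simp only [f, if_pos hp]
          _ = M * ∏ p ∈ d.primeFactors, ((p : ℝ) * (1 + 1 / (p * (p - 1)))) := by
              rw [Finset.prod_mul_distrib, hM, hs']; push_cast; rfl
          _ ≤ _ := by gcongr; exact sf_prod_bound d hds
      calc _ ≤ (K : ℝ) / M * (M * (d * Real.exp 1)) := by gcongr
        _ = _ := by field_simp
    · have : ∃ p ∈ s, ¬ (p ∈ d.primeFactors ∧ p ∈ e.primeFactors) := by
        by_contra hcon
        push Not at hcon
        apply hde
        rw [← Nat.prod_primeFactors_of_squarefree hds, ← Nat.prod_primeFactors_of_squarefree hes]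
        congr 1
        ext p
        exact ⟨fun h => (hcon p (Finset.mem_union_left _ h)).2,
          fun h => (hcon p (Finset.mem_union_right _ h)).1⟩
      obtain ⟨p, hp, hnp⟩ := this
      rw [Finset.prod_eq_zero hp, mul_zero]
      rw [← sfh_sum p (hsp p hp)]
      refine Finset.sum_congr rfl fun k _ => ?_
      simp only [f]
      rcases Finset.mem_union.1 hp with h | h
      · have h' : p ∉ e.primeFactors := fun h' => hnp ⟨h, h'⟩
        rw [if_pos h, if_neg h', mul_one]
      · have h' : p ∉ d.primeFactors := fun h' => hnp ⟨h', h⟩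
        rw [if_pos h, if_neg h', one_mul]
  · calc 2 * ((M : ℝ) * (z : ℝ) ^ 4) ≤ 2 * ((z : ℝ) ^ 4 * (z : ℝ) ^ 4) := by gcongr
      _ = _ := by ring

lemma sf_sieve (q z K c : ℕ) (hz : 1 ≤ z) (A : Finset ℕ) (hA : A ⊆ range K)
    (hsf : ∀ k ∈ A, ∀ p : ℕ, p.Prime → p ∣ c + q * k → p ^ 2 ∣ c + q * k) :
    (A.card : ℝ) * ∑ d ∈ (Icc 1 z).filter (fun d => Squarefree d ∧ Nat.Coprime d q), (1 / d : ℝ)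
      ≤ Real.exp 1 * K + 2 * (z : ℝ) ^ 10 := by
  classical
  set D := (Icc 1 z).filter (fun d => Squarefree d ∧ Nat.Coprime d q) with hD
  set S := ∑ d ∈ D, (1 / d : ℝ) with hS
  have hDmem : ∀ d ∈ D, 1 ≤ d ∧ d ≤ z ∧ Squarefree d ∧ Nat.Coprime d q := by
    intro d hd
    simp only [hD, Finset.mem_filter, Finset.mem_Icc] at hd
    tauto
  have hS1 : 1 ≤ S := by
    have h1 : 1 ∈ D := by simp [hD, hz]
    have := Finset.single_le_sum (f := fun d : ℕ => (1 / d : ℝ)) (fun d _ => by positivity) h1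
    rw [hS]
    simpa using this
  have hle : (A.card : ℝ) * S ^ 2 ≤
      ∑ k ∈ range K, (∑ d ∈ D, (1 / d : ℝ) * sfH d (c + q * k)) ^ 2 := by
    calc (A.card : ℝ) * S ^ 2 = ∑ k ∈ A, (∑ d ∈ D, (1 / d : ℝ) * sfH d (c + q * k)) ^ 2 := by
          rw [← nsmul_eq_mul, ← Finset.sum_const]
          refine Finset.sum_congr rfl fun k hk => ?_
          congr 1
          refine Finset.sum_congr rfl fun d _ => ?_
          rw [sfH_squarefull d _ (hsf k hk), mul_one]
      _ ≤ _ := Finset.sum_le_sum_of_subset_of_nonneg hA fun _ _ _ => sq_nonneg _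
  have hexp : ∑ k ∈ range K, (∑ d ∈ D, (1 / d : ℝ) * sfH d (c + q * k)) ^ 2 =
      ∑ d ∈ D, ∑ e ∈ D, (1 / d : ℝ) * (1 / e : ℝ) *
        ∑ k ∈ range K, sfH d (c + q * k) * sfH e (c + q * k) := by
    simp_rw [pow_two, Finset.sum_mul_sum]
    rw [Finset.sum_comm]
    refine Finset.sum_congr rfl fun d _ => ?_
    rw [Finset.sum_comm]
    refine Finset.sum_congr rfl fun e _ => ?_
    rw [Finset.mul_sum]
    refine Finset.sum_congr rfl fun k _ => ?_
    ring
  have hub : ∑ d ∈ D, ∑ e ∈ D, (1 / d : ℝ) * (1 / e : ℝ) *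
        ∑ k ∈ range K, sfH d (c + q * k) * sfH e (c + q * k) ≤
      Real.exp 1 * K * S + 2 * (z : ℝ) ^ 10 := by
    calc _ ≤ ∑ d ∈ D, ∑ e ∈ D, ((if d = e then (1 / d : ℝ) * (Real.exp 1 * K) else 0)
            + 2 * (z : ℝ) ^ 8) := by
          refine Finset.sum_le_sum fun d hd => Finset.sum_le_sum fun e he => ?_
          obtain ⟨hd1, hdz, hds, hdq⟩ := hDmem d hd
          obtain ⟨he1, hez, hes, heq⟩ := hDmem e he
          have hd1r : (1 : ℝ) ≤ d := by exact_mod_cast hd1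
          have he1r : (1 : ℝ) ≤ e := by exact_mod_cast he1
          have h1 := sf_pair q z K c d e hdz hez hds hes hdq heq
          have hw : (1 / d : ℝ) * (1 / e : ℝ) ≤ 1 := by
            rw [one_div_mul_one_div, div_le_one (by positivity)]
            nlinarith
          have hw0 : (0 : ℝ) ≤ (1 / d : ℝ) * (1 / e : ℝ) := by positivity
          refine (mul_le_mul_of_nonneg_left h1 hw0).trans ?_
          rw [mul_add]
          refine add_le_add ?_ (mul_le_of_le_one_left (by positivity) hw)
          split_ifs with h
          · subst h
            apply le_of_eq
            field_simp
          · simp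
      _ = Real.exp 1 * K * S + (D.card : ℝ) ^ 2 * (2 * (z : ℝ) ^ 8) := by
          simp_rw [Finset.sum_add_distrib]
          congr 1
          · rw [hS, Finset.mul_sum]
            refine Finset.sum_congr rfl fun d hd => ?_
            rw [Finset.sum_ite_eq, if_pos hd]; ring
          · simp; ring
      _ ≤ Real.exp 1 * K * S + (z : ℝ) ^ 2 * (2 * (z : ℝ) ^ 8) := by
          have : D.card ≤ z := by
            refine (Finset.card_filter_le _ _).trans ?_
            simp
          gcongr
      _ = _ := by ring
  have hfin : (A.card : ℝ) * S ^ 2 ≤ Real.exp 1 * K * S + 2 * (z : ℝ) ^ 10 :=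
    hle.trans (hexp.le.trans hub)
  have h10 : 2 * (z : ℝ) ^ 10 ≤ 2 * (z : ℝ) ^ 10 * S := le_mul_of_one_le_right (by positivity) hS1
  have : ((A.card : ℝ) * S) * S ≤ (Real.exp 1 * K + 2 * (z : ℝ) ^ 10) * S := by nlinarith
  exact le_of_mul_le_mul_right this (by linarith)

/-- For every `0 < α < 1` there is a constant `C = C(α) > 0` such that for all real
`x ≥ 1`, `1 ≤ y ≤ x`, and integers `q ≥ 1`, `r` with `gcd(r, q) = 1` and
`q ≤ y^(1-α)`, the number of squarefull `n` with `x < n ≤ x + y` and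
`n ≡ r (mod q)` is at most `C · y / (φ(q) · log (y + 1))`. -/
theorem squarefull_short_interval_AP_bound (α : ℝ) (hα0 : 0 < α) (hα1 : α < 1) :
    ∃ C : ℝ, 0 < C ∧ ∀ (x y : ℝ) (q : ℕ) (r : ℤ), 1 ≤ x → 1 ≤ y → y ≤ x →
      1 ≤ q → Int.gcd r (q : ℤ) = 1 → (q : ℝ) ≤ y ^ (1 - α) →
      (({n : ℕ | x < (n : ℝ) ∧ (n : ℝ) ≤ x + y ∧ 0 < n ∧ IsSquarefull n ∧
          (n : ℤ) ≡ r [ZMOD (q : ℤ)]}.ncard : ℝ))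
        ≤ C * y / ((Nat.totient q : ℝ) * Real.log (y + 1)) := by
  classical
  refine ⟨(2 * Real.exp 1 + 2) * (2 * (1 + 10 / α)), by positivity, ?_⟩
  intro x y q r hx hy _ hq _ hqy
  set E := {n : ℕ | x < (n : ℝ) ∧ (n : ℝ) ≤ x + y ∧ 0 < n ∧ IsSquarefull n ∧
          (n : ℤ) ≡ r [ZMOD (q : ℤ)]} with hE
  have hlogy : 0 < Real.log (y + 1) := Real.log_pos (by linarith)
  have hφ : (0 : ℝ) < Nat.totient q := by exact_mod_cast Nat.totient_pos.2 hq
  have hq0 : (0 : ℝ) < q := by exact_mod_cast hq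
  have hy0 : 0 < y := by linarith
  rcases E.eq_empty_or_nonempty with hemp | hne
  · rw [hemp]
    simp only [Set.ncard_empty, Nat.cast_zero]
    positivity
  -- the least element of the set
  obtain ⟨c, hcE, hcmin⟩ : ∃ c ∈ E, ∀ n ∈ E, c ≤ n :=
    ⟨sInf E, Nat.sInf_mem hne, fun n hn => Nat.sInf_le hn⟩
  set K := ⌊y / q⌋₊ + 1 with hK
  set A := (range K).filter (fun k => IsSquarefull (c + q * k)) with hA
  have hsub : E ⊆ ((A.image (fun k => c + q * k) : Finset ℕ) : Set ℕ) := by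
    intro n hn
    have hcn := hcmin n hn
    have hmod : c ≡ n [MOD q] := by
      have := hcE.2.2.2.2.trans hn.2.2.2.2.symm
      exact (Int.natCast_modEq_iff).1 this
    obtain ⟨k, hk⟩ := (Nat.modEq_iff_dvd' hcn).1 hmod
    have hnk : n = c + q * k := by omega
    simp only [Finset.coe_image, Set.mem_image, Finset.mem_coe, hA, Finset.mem_filter,
      Finset.mem_range]
    refine ⟨k, ⟨?_, hnk ▸ hn.2.2.2.1⟩, hnk.symm⟩
    rw [hK, Nat.lt_succ_iff]
    refine Nat.le_floor ?_
    rw [le_div_iff₀ hq0]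
    have h1 : (n : ℝ) = c + q * k := by exact_mod_cast hnk
    have h2 := hn.2.1
    have h3 := hcE.1
    nlinarith
  have hcard : (E.ncard : ℝ) ≤ A.card := by
    have h1 := Set.ncard_le_ncard hsub (Finset.finite_toSet _)
    rw [Set.ncard_coe_finset] at h1
    exact_mod_cast h1.trans Finset.card_image_le
  -- parameters
  set u := y / q with hu
  have hyα : y ^ α ≤ u := by
    rw [hu, le_div_iff₀ hq0]
    calc y ^ α * q ≤ y ^ α * y ^ (1 - α) := by gcongr
      _ = y := by rw [← Real.rpow_add hy0]; simp
  have hu1 : 1 ≤ u := (Real.one_le_rpow hy hα0.le).trans hyα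
  have hu0 : 0 < u := by linarith
  set z := ⌊u ^ (1 / 10 : ℝ)⌋₊ with hz
  have hz1 : 1 ≤ z := Nat.le_floor (by simpa using Real.one_le_rpow hu1 (by norm_num))
  have hz10 : (z : ℝ) ^ 10 ≤ u := by
    calc (z : ℝ) ^ 10 ≤ (u ^ (1 / 10 : ℝ)) ^ 10 := by
          gcongr
          exact Nat.floor_le (by positivity)
      _ = u := by
          rw [← Real.rpow_natCast, ← Real.rpow_mul hu0.le]; norm_num
  have hlz : α / 10 * Real.log y ≤ Real.log (z + 1) := by
    have h1 : u ^ (1 / 10 : ℝ) ≤ z + 1 := (Nat.lt_floor_add_one _).le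
    calc α / 10 * Real.log y = (1 / 10) * Real.log (y ^ α) := by rw [Real.log_rpow hy0]; ring
      _ ≤ (1 / 10) * Real.log u := by gcongr
      _ = Real.log (u ^ (1 / 10 : ℝ)) := by rw [Real.log_rpow hu0]
      _ ≤ _ := by gcongr
  have hl2 : Real.log 2 ≤ Real.log (z + 1) := by
    have : (1 : ℝ) ≤ z := by exact_mod_cast hz1
    gcongr
    linarith
  have hlog : Real.log (y + 1) ≤ (1 + 10 / α) * Real.log (z + 1) := by
    have h1 : Real.log (y + 1) ≤ Real.log (2 * y) := by gcongr; linarith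
    rw [Real.log_mul (by norm_num) hy0.ne'] at h1
    have h2 : Real.log y ≤ 10 / α * Real.log (z + 1) := by
      calc Real.log y = 10 / α * (α / 10 * Real.log y) := by field_simp
        _ ≤ _ := by gcongr
    linarith
  have hsieve := sf_sieve q z K c hz1 A (Finset.filter_subset _ _) (by
    intro k hk
    exact (Finset.mem_filter.1 hk).2)
  have hlow := sf_S_lower q hq z
  set S := ∑ d ∈ (Icc 1 z).filter (fun d => Squarefree d ∧ Nat.Coprime d q), (1 / d : ℝ) with hS
  have hKle : (K : ℝ) ≤ 2 * u := by
    have : ((⌊u⌋₊ : ℕ) : ℝ) ≤ u := Nat.floor_le hu0.le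
    rw [hK]; push_cast; linarith
  have hub : (A.card : ℝ) * S ≤ (2 * Real.exp 1 + 2) * u := by
    have : Real.exp 1 * K ≤ Real.exp 1 * (2 * u) := by gcongr
    linarith
  have hα' : 0 < 1 + 10 / α := by positivity
  have hlogS : Real.log (y + 1) ≤ (1 + 10 / α) * ((q / Nat.totient q : ℝ) * (2 * S)) :=
    hlog.trans (by gcongr)
  refine hcard.trans ?_
  rw [le_div_iff₀ (by positivity)]
  calc (A.card : ℝ) * (Nat.totient q * Real.log (y + 1))
      ≤ (A.card : ℝ) * (Nat.totient q *
          ((1 + 10 / α) * ((q / Nat.totient q : ℝ) * (2 * S)))) := by gcongr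
    _ = (2 * (1 + 10 / α)) * q * (A.card * S) := by field_simp
    _ ≤ (2 * (1 + 10 / α)) * q * ((2 * Real.exp 1 + 2) * u) := by gcongr
    _ = _ := by rw [hu]; field_simp
end

section
/- There exists a constant C > 0 such that for all real x ≥ 1 and all real y with 1 ≤ y ≤ x, the number of squarefull integers n with x < n ≤ x + y whose largest prime factor satisfies p⁺(n) ≤ y^{1/2} is at most C · y^{11/12}. -/
lemma sqfull_decomp {n : ℕ} (hn : 0 < n) (h : IsSquarefull n) :
    ∃ b : ℕ, 0 < b ∧ b ^ 2 ∣ n ∧ n ≤ b ^ 3 := by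
  obtain ⟨a, b, ha, hb, hab, hsf⟩ := Nat.sq_mul_squarefree_of_pos hn
  have hdvd : a ∣ b := by
    rw [← Nat.prod_primeFactors_of_squarefree hsf]
    refine dvd_trans (Finset.prod_dvd_prod_of_subset _ b.primeFactors _ ?_)
      (Nat.prod_primeFactors_dvd b)
    intro p hp
    have hpp := Nat.prime_of_mem_primeFactors hp
    have hpa := Nat.dvd_of_mem_primeFactors hp
    have h2 : p * p ∣ b ^ 2 * a := by
      rw [hab, ← sq]
      exact h p hpp (hab ▸ hpa.mul_left _)
    have h3 : p ∣ b ^ 2 := hsf.dvd_of_squarefree_of_mul_dvd_mul_left h2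
    exact Nat.mem_primeFactors.mpr ⟨hpp, hpp.dvd_of_dvd_pow h3, hb.ne'⟩
  refine ⟨b, hb, ⟨a, hab.symm⟩, ?_⟩
  have := Nat.le_of_dvd hb hdvd
  rw [← hab]
  nlinarith [Nat.mul_le_mul_left (b^2) this]

lemma exists_mid_divisor (m : ℕ) (hm : 0 < m) (A P : ℝ) (hA : 1 ≤ A) (hAm : A ≤ m) (hP : 1 ≤ P)
    (h : ∀ p : ℕ, p.Prime → p ∣ m → (p : ℝ) ≤ P) :
    ∃ k : ℕ, k ∣ m ∧ A ≤ k ∧ (k : ℝ) ≤ A * P := by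
  classical
  have hex : ∃ k : ℕ, k ∣ m ∧ A ≤ k := ⟨m, dvd_rfl, hAm⟩
  obtain ⟨h1, h2⟩ := Nat.find_spec hex
  have hmin := fun j => @Nat.find_min _ _ hex j
  set k := Nat.find hex
  refine ⟨k, h1, h2, ?_⟩
  by_cases hk : k = 1
  · rw [hk]; push_cast; nlinarith
  obtain ⟨p, hp, hpk⟩ := Nat.exists_prime_and_dvd hk
  obtain ⟨j, hj⟩ := hpk
  have hk0 : 0 < k := Nat.pos_of_dvd_of_pos h1 hm
  have hj0 : 0 < j := by
    rcases Nat.eq_zero_or_pos j with h0 | h0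
    · simp [h0] at hj; omega
    · exact h0
  have hjk : j < k := by rw [hj]; nlinarith [hp.two_le]
  have hjA : (j : ℝ) < A := by
    by_contra hc
    exact hmin j hjk ⟨(Dvd.intro_left p hj.symm).trans h1, not_lt.mp hc⟩
  have hpP := h p hp ((Dvd.intro j hj.symm).trans h1)
  rw [hj]; push_cast
  nlinarith [(Nat.cast_nonneg j : (0:ℝ) ≤ j)]

theorem smooth_squarefull_short_interval_bound :
    ∃ C : ℝ, 0 < C ∧ ∀ x y : ℝ, 1 ≤ x → 1 ≤ y → y ≤ x →
      (({n : ℕ | x < (n : ℝ) ∧ (n : ℝ) ≤ x + y ∧ 0 < n ∧ IsSquarefull n ∧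
          ∀ p : ℕ, p.Prime → p ∣ n → (p : ℝ) ≤ y ^ ((1 : ℝ) / 2)}.ncard : ℝ))
        ≤ C * y ^ ((11 : ℝ) / 12) := by
  classical
  refine ⟨3, by norm_num, ?_⟩
  intro x y hx hy hyx
  have hy0 : 0 < y := by linarith
  set A : ℝ := y ^ ((1:ℝ)/4) with hAdef
  set P : ℝ := y ^ ((1:ℝ)/2) with hPdef
  have hA1 : 1 ≤ A := Real.one_le_rpow hy (by norm_num)
  have hP1 : 1 ≤ P := Real.one_le_rpow hy (by norm_num)
  have hAP : A * P = y ^ ((3:ℝ)/4) := by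
    rw [hAdef, hPdef, ← Real.rpow_add hy0]; norm_num
  have hA3 : A * y ^ ((3:ℝ)/4) = y := by
    rw [hAdef, ← Real.rpow_add hy0]; norm_num
  have hA4 : A ^ 3 ≤ y := by
    rw [hAdef, ← Real.rpow_natCast, ← Real.rpow_mul hy0.le]
    calc _ ≤ y ^ (1:ℝ) := Real.rpow_le_rpow_of_exponent_le hy (by norm_num)
      _ = y := Real.rpow_one y
  set N := ⌊A * P⌋₊ with hN
  set M := ⌈A⌉₊ with hM
  have hM1 : 1 ≤ M := Nat.one_le_ceil_iff.mpr (by linarith)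
  have hsub : {n : ℕ | x < (n : ℝ) ∧ (n : ℝ) ≤ x + y ∧ 0 < n ∧ IsSquarefull n ∧
          ∀ p : ℕ, p.Prime → p ∣ n → (p : ℝ) ≤ P} ⊆
      (((Finset.Ioo (M-1) (N+1)).biUnion fun k =>
        (Finset.Ioc ⌊x/(k:ℝ)^2⌋₊ ⌊(x+y)/(k:ℝ)^2⌋₊).image fun j => k^2*j : Finset ℕ) : Set ℕ) := by
    rintro n ⟨hn1, hn2, hn0, hsq, hsm⟩
    obtain ⟨b, hb, hbn, hnb⟩ := sqfull_decomp hn0 hsq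
    have hAb : A ≤ b := by
      have h1 : (n:ℝ) ≤ (b:ℝ)^3 := by exact_mod_cast hnb
      exact le_of_pow_le_pow_left₀ (n := 3) (by norm_num) (by positivity) (by linarith)
    obtain ⟨k, hkb, hAk, hkP⟩ := exists_mid_divisor b hb A P hA1 hAb hP1
      (fun p hp hpb => hsm p hp ((hpb.trans (dvd_pow_self b (by norm_num))).trans hbn))
    obtain ⟨j, hj⟩ := (pow_dvd_pow_of_dvd hkb 2).trans hbn
    have hMk : M ≤ k := Nat.ceil_le.mpr hAk
    have hkN : k ≤ N := Nat.le_floor hkP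
    have hk2 : (0:ℝ) < (k:ℝ)^2 := by have : (0:ℝ) < k := by linarith
                                     positivity
    have hjr : (n:ℝ) = (k:ℝ)^2 * j := by rw [hj]; push_cast; ring
    simp only [Finset.coe_biUnion, Finset.coe_image, Set.mem_iUnion, Set.mem_image,
      Finset.mem_coe, Finset.mem_Ioo, Finset.mem_Ioc]
    refine ⟨k, ⟨by omega, by omega⟩, j, ⟨?_, ?_⟩, hj.symm⟩
    · rw [Nat.floor_lt (by positivity), div_lt_iff₀ hk2]; linarith
    · apply Nat.le_floor; rw [le_div_iff₀ hk2]; linarith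
  have hcard := Set.ncard_le_ncard hsub (Finset.finite_toSet _)
  rw [Set.ncard_coe_finset] at hcard
  have hcard2 := hcard.trans (Finset.card_biUnion_le.trans
    (Finset.sum_le_sum fun k _ => Finset.card_image_le))
  have hterm : ∀ k ∈ Finset.Ioo (M-1) (N+1),
      (((Finset.Ioc ⌊x/(k:ℝ)^2⌋₊ ⌊(x+y)/(k:ℝ)^2⌋₊).card : ℕ) : ℝ) ≤ y * ((k:ℝ)^2)⁻¹ + 1 := by
    intro k _
    have h1 : ⌊x/(k:ℝ)^2⌋₊ ≤ ⌊(x+y)/(k:ℝ)^2⌋₊ := Nat.floor_mono (by gcongr; linarith)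
    rw [Nat.card_Ioc, Nat.cast_sub h1]
    have h2 := Nat.floor_le (a := (x+y)/(k:ℝ)^2) (by positivity)
    have h3 := Nat.lt_floor_add_one (x/(k:ℝ)^2)
    have h4 := add_div x y ((k:ℝ)^2)
    rw [← div_eq_mul_inv]
    linarith
  have hsum := Finset.sum_le_sum hterm
  rw [Finset.sum_add_distrib, ← Finset.mul_sum] at hsum
  have hsq := sum_Ioo_inv_sq_le (α := ℝ) (M-1) (N+1)
  have hMr : A ≤ ((M-1 : ℕ) : ℝ) + 1 := by
    have : ((M-1 : ℕ) : ℝ) + 1 = M := by rw [Nat.cast_sub hM1]; simp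
    rw [this]; exact Nat.le_ceil A
  have hsq2 : y * ∑ i ∈ Finset.Ioo (M-1) (N+1), ((i:ℝ)^2)⁻¹ ≤ 2 * y ^ ((3:ℝ)/4) := by
    calc _ ≤ y * (2 / A) := by
          gcongr
          exact hsq.trans (by gcongr)
      _ = (A * y ^ ((3:ℝ)/4)) * (2 / A) := by rw [hA3]
      _ = _ := by field_simp
  have hones : ∑ i ∈ Finset.Ioo (M-1) (N+1), (1:ℝ) ≤ y ^ ((3:ℝ)/4) := by
    rw [Finset.sum_const, nsmul_eq_mul, mul_one, Nat.card_Ioo, ← hAP]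
    refine le_trans ?_ (Nat.floor_le (by positivity : 0 ≤ A * P))
    exact_mod_cast (by omega)
  have hfin : y ^ ((3:ℝ)/4) ≤ y ^ ((11:ℝ)/12) :=
    Real.rpow_le_rpow_of_exponent_le hy (by norm_num)
  have hc : (({n : ℕ | x < (n : ℝ) ∧ (n : ℝ) ≤ x + y ∧ 0 < n ∧ IsSquarefull n ∧
          ∀ p : ℕ, p.Prime → p ∣ n → (p : ℝ) ≤ P}.ncard : ℝ)) ≤ 
      ∑ k ∈ Finset.Ioo (M-1) (N+1),
      (((Finset.Ioc ⌊x/(k:ℝ)^2⌋₊ ⌊(x+y)/(k:ℝ)^2⌋₊).card : ℕ) : ℝ) := by exact_mod_cast hcard2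
  linarith
end

section
/- For every integer k ≥ 2 there exists a constant C > 0 such that for all real x ≥ 1 and all real y with 1 ≤ y ≤ x, the number of k-full integers n with x < n ≤ x + y whose largest prime factor satisfies p⁺(n) ≤ y^{1/2} is at most C · y^{11/12}. -/
theorem exists_sq_dvd_cube_ge (n : ℕ) (hn : 0 < n)
    (h : ∀ p : ℕ, p.Prime → p ∣ n → p ^ 2 ∣ n) :
    ∃ m : ℕ, 0 < m ∧ m ^ 2 ∣ n ∧ n ≤ m ^ 3 := by
  obtain ⟨a, b, ha, hb, hab, hsq⟩ := Nat.sq_mul_squarefree_of_pos hn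
  refine ⟨b, hb, ⟨a, hab.symm⟩, ?_⟩
  have hdvd : a ∣ b := by
    rw [← Nat.prod_primeFactors_of_squarefree hsq]
    refine Finset.prod_primes_dvd b (fun p hp => (Nat.prime_of_mem_primeFactors hp).prime) ?_
    intro p hp
    have hpp := Nat.prime_of_mem_primeFactors hp
    have hpa := Nat.dvd_of_mem_primeFactors hp
    by_contra hpb
    have h2 : p ^ 2 ∣ b ^ 2 * a := by
      rw [hab]; exact h p hpp (hab ▸ hpa.mul_left _)
    have hco : Nat.Coprime (p ^ 2) (b ^ 2) :=
      Nat.Coprime.pow 2 2 ((Nat.Prime.coprime_iff_not_dvd hpp).2 hpb)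
    have h3 : p * p ∣ a := by
      rw [← pow_two]; exact hco.dvd_of_dvd_mul_left h2
    exact hpp.one_lt.ne' (Nat.isUnit_iff.1 (hsq p h3))
  have : a ≤ b := Nat.le_of_dvd hb hdvd
  calc n = b ^ 2 * a := hab.symm
    _ ≤ b ^ 2 * b := Nat.mul_le_mul_left _ this
    _ = b ^ 3 := by ring

theorem exists_mid_divisor_s3 (m : ℕ) (hm : 0 < m) (t : ℝ) (ht : 1 ≤ t) (hmt : t < m)
    (h : ∀ p : ℕ, p.Prime → p ∣ m → (p : ℝ) ≤ t ^ 6) :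
    ∃ e : ℕ, e ∣ m ∧ t < e ∧ (e : ℝ) ≤ t ^ 6 := by
  classical
  have hex : ∃ e : ℕ, e ∣ m ∧ t < e := ⟨m, dvd_rfl, hmt⟩
  obtain ⟨hd, hlt⟩ := Nat.find_spec hex
  have hmin : ∀ f : ℕ, f < Nat.find hex → f ∣ m → (f : ℝ) ≤ t := by
    intro f hf hfm
    have := Nat.find_min hex hf
    push Not at this
    exact this hfm
  generalize Nat.find hex = e at hd hlt hmin
  refine ⟨e, hd, hlt, ?_⟩
  have he1 : 1 < e := by
    have : (1 : ℝ) < e := lt_of_le_of_lt ht hlt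
    exact_mod_cast this
  obtain ⟨p, hp, f, rfl⟩ := Nat.exists_prime_and_dvd (n := e) (by omega)
  have hf0 : 0 < f := by
    rcases Nat.eq_zero_or_pos f with h0 | h0
    · simp [h0] at he1
    · exact h0
  have hpm : p ∣ m := (Dvd.intro _ rfl).trans hd
  have hfm : f ∣ m := (Dvd.intro_left _ rfl).trans hd
  have hft : (f : ℝ) ≤ t := by
    apply hmin f _ hfm
    have := hp.two_le
    nlinarith
  rcases Nat.lt_or_ge 1 f with h1 | h1
  · have hpt : (p : ℝ) ≤ t := by
      apply hmin p _ hpm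
      have := hp.pos
      nlinarith
    push_cast
    calc (p : ℝ) * f ≤ t * t := by gcongr
      _ = t ^ 2 := by ring
      _ ≤ t ^ 6 := pow_le_pow_right₀ ht (by norm_num)
  · have : f = 1 := by omega
    subst this
    simpa using h p hp hpm

theorem main_bound (x t : ℝ) (hx : 1 ≤ x) (ht : 1 ≤ t) (hyx : t ^ 12 ≤ x) (S : Set ℕ)
    (hS : ∀ n ∈ S, x < (n : ℝ) ∧ (n : ℝ) ≤ x + t ^ 12 ∧ 0 < n ∧
      (∀ p : ℕ, p.Prime → p ∣ n → p ^ 2 ∣ n) ∧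
      ∀ p : ℕ, p.Prime → p ∣ n → (p : ℝ) ≤ t ^ 6) :
    (S.ncard : ℝ) ≤ 4 * t ^ 11 := by
  classical
  have ht0 : 0 < t := by linarith
  let M : ℕ → Finset ℕ := fun e =>
    (Finset.Ioc ⌊x / (e : ℝ) ^ 2⌋₊ ⌊(x + t ^ 12) / (e : ℝ) ^ 2⌋₊).image (fun q => e ^ 2 * q)
  let I := Finset.Ioo ⌊t⌋₊ (⌊t ^ 6⌋₊ + 1)
  have hsub : S ⊆ ((I.biUnion M : Finset ℕ) : Set ℕ) := by
    intro n hn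
    obtain ⟨h1, h2, h3, h4, h5⟩ := hS n hn
    obtain ⟨m, hm, hmn, hnm⟩ := exists_sq_dvd_cube_ge n h3 h4
    have hmn' : m ∣ n := (Dvd.intro_left _ (by ring : m * m = m ^ 2)).trans hmn
    have htm : t < m := by
      have h6 : t ^ 3 < (m : ℝ) ^ 3 := by
        calc t ^ 3 ≤ t ^ 12 := pow_le_pow_right₀ ht (by norm_num)
          _ ≤ x := hyx
          _ < n := h1
          _ ≤ (m : ℝ) ^ 3 := by exact_mod_cast hnm
      exact lt_of_pow_lt_pow_left₀ 3 (by positivity) h6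
    obtain ⟨e, hem, hte, het⟩ := exists_mid_divisor_s3 m hm t ht htm
      (fun p hp hpm => h5 p hp (hpm.trans hmn'))
    obtain ⟨q, hq⟩ := (pow_dvd_pow_of_dvd hem 2).trans hmn
    have he0 : (0 : ℝ) < e := ht0.trans hte
    simp only [Finset.coe_biUnion, Set.mem_iUnion, Finset.mem_coe, M, Finset.mem_image, I,
      Finset.mem_Ioo, Finset.mem_Ioc]
    have hnq : (n : ℝ) = (e : ℝ) ^ 2 * q := by rw [hq]; push_cast; ring
    refine ⟨e, ⟨?_, ?_⟩, q, ⟨?_, ?_⟩, hq.symm⟩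
    · exact (Nat.floor_lt ht0.le).2 hte
    · exact Nat.lt_succ_of_le (Nat.le_floor het)
    · rw [Nat.floor_lt (by positivity), div_lt_iff₀ (by positivity)]
      linarith
    · apply Nat.le_floor
      rw [le_div_iff₀ (by positivity)]
      linarith
  have hcard : ∀ e ∈ I, ((M e).card : ℝ) ≤ 2 * t ^ 12 * ((e : ℝ) ^ 2)⁻¹ := by
    intro e he
    obtain ⟨h1, h2⟩ := Finset.mem_Ioo.1 he
    have hte : t < e := (Nat.floor_lt ht0.le).1 h1
    have he0 : (0 : ℝ) < e := ht0.trans hte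
    have het : (e : ℝ) ≤ t ^ 6 := by
      have : e ≤ ⌊t ^ 6⌋₊ := by omega
      exact (Nat.le_floor_iff (by positivity)).1 this
    have hle : (M e).card ≤ ⌊(x + t ^ 12) / (e : ℝ) ^ 2⌋₊ - ⌊x / (e : ℝ) ^ 2⌋₊ := by
      refine Finset.card_image_le.trans ?_
      simp
    have hmono : ⌊x / (e : ℝ) ^ 2⌋₊ ≤ ⌊(x + t ^ 12) / (e : ℝ) ^ 2⌋₊ := by
      apply Nat.floor_mono
      gcongr
      have : 0 < t ^ 12 := by positivity
      linarith
    have hle' : ((M e).card : ℝ) ≤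
        (⌊(x + t ^ 12) / (e : ℝ) ^ 2⌋₊ : ℝ) - ⌊x / (e : ℝ) ^ 2⌋₊ := by
      rw [← Nat.cast_sub hmono]
      exact_mod_cast hle
    have hf1 := Nat.floor_le (a := (x + t ^ 12) / (e : ℝ) ^ 2) (by positivity)
    have hf2 := Nat.lt_floor_add_one (x / (e : ℝ) ^ 2)
    have hone : 1 ≤ t ^ 12 * ((e : ℝ) ^ 2)⁻¹ := by
      rw [← div_eq_mul_inv, one_le_div (by positivity)]
      calc (e : ℝ) ^ 2 ≤ (t ^ 6) ^ 2 := by gcongr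
        _ = t ^ 12 := by ring
    rw [add_div] at hf1 hle'
    have : t ^ 12 / (e : ℝ) ^ 2 = t ^ 12 * ((e : ℝ) ^ 2)⁻¹ := div_eq_mul_inv _ _
    linarith
  have hsum := sum_Ioo_inv_sq_le (α := ℝ) ⌊t⌋₊ (⌊t ^ 6⌋₊ + 1)
  calc (S.ncard : ℝ) ≤ ((I.biUnion M).card : ℝ) := by
        rw [← Set.ncard_coe_finset]
        exact_mod_cast Set.ncard_le_ncard hsub (Finset.finite_toSet _)
    _ ≤ ∑ e ∈ I, ((M e).card : ℝ) := by exact_mod_cast Finset.card_biUnion_le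
    _ ≤ ∑ e ∈ I, 2 * t ^ 12 * ((e : ℝ) ^ 2)⁻¹ := Finset.sum_le_sum hcard
    _ = 2 * t ^ 12 * ∑ e ∈ I, ((e : ℝ) ^ 2)⁻¹ := by rw [Finset.mul_sum]
    _ ≤ 2 * t ^ 12 * (2 / (⌊t⌋₊ + 1)) := by gcongr
    _ ≤ 2 * t ^ 12 * (2 / t) := by
        gcongr
        exact (Nat.lt_floor_add_one t).le
    _ = 4 * t ^ 11 := by field_simp; ring

/-- For every integer `k ≥ 2` there is a constant `C > 0` such that for all real
`x ≥ 1` and `1 ≤ y ≤ x`, the number of `k`-full `n` with `x < n ≤ x + y` all of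
whose prime factors are at most `y^(1/2)` is at most `C · y^(11/12)`. -/
theorem smooth_kfull_short_interval_bound (k : ℕ) (hk : 2 ≤ k) :
    ∃ C : ℝ, 0 < C ∧ ∀ x y : ℝ, 1 ≤ x → 1 ≤ y → y ≤ x →
      (({n : ℕ | x < (n : ℝ) ∧ (n : ℝ) ≤ x + y ∧ 0 < n ∧ IsKFull k n ∧
          ∀ p : ℕ, p.Prime → p ∣ n → (p : ℝ) ≤ y ^ ((1 : ℝ) / 2)}.ncard : ℝ))
        ≤ C * y ^ ((11 : ℝ) / 12) := by
  refine ⟨4, by norm_num, fun x y hx hy hyx => ?_⟩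
  have hy0 : 0 ≤ y := by linarith
  have e1 : (y ^ ((1 : ℝ) / 12)) ^ 12 = y := by
    rw [← Real.rpow_natCast, ← Real.rpow_mul hy0]; norm_num
  have e2 : (y ^ ((1 : ℝ) / 12)) ^ 6 = y ^ ((1 : ℝ) / 2) := by
    rw [← Real.rpow_natCast, ← Real.rpow_mul hy0]; norm_num
  have e3 : (y ^ ((1 : ℝ) / 12)) ^ 11 = y ^ ((11 : ℝ) / 12) := by
    rw [← Real.rpow_natCast, ← Real.rpow_mul hy0]; norm_num
  rw [← e3]
  apply main_bound x _ hx (Real.one_le_rpow hy (by norm_num)) (by rw [e1]; exact hyx)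
  rintro n ⟨h1, h2, h3, h4, h5⟩
  rw [e1, e2]
  exact ⟨h1, h2, h3, fun p hp hpn => (pow_dvd_pow p hk).trans (h4 p hp hpn), h5⟩
end

section
/- Assume the abc-conjecture. Then for every integer k ≥ 3 and every real ε > 0 there exists a constant C = C(k, ε) > 0 such that for all real x ≥ 1 and all real y with 1 ≤ y ≤ x, the number of k-full integers in the interval (x, x + y] satisfies Q_k(x + y) − Q_k(x) ≤ C · y^{(2 + ε)/k}. -/
/-- The radical (kernel) of a natural number: the product of its prime divisors. -/
def natRadical (n : ℕ) : ℕ := ∏ p ∈ n.primeFactors, p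

/-- The abc-conjecture: for every `ε > 0` there is `C_ε > 0` such that for all
coprime positive integers `a`, `b`, `c` with `a + b = c`, one has
`c ≤ C_ε · rad(a·b·c)^(1+ε)`. -/
def ABCConjecture : Prop :=
  ∀ ε : ℝ, 0 < ε → ∃ Cε : ℝ, 0 < Cε ∧ ∀ a b c : ℕ,
    0 < a → 0 < b → 0 < c → Nat.Coprime a b → a + b = c →
    (c : ℝ) ≤ Cε * (natRadical (a * b * c) : ℝ) ^ (1 + ε)

theorem natRadical_dvd_of (m X : ℕ) (h : ∀ p : ℕ, p.Prime → p ∣ m → p ∣ X) :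
    natRadical m ∣ X := by
  unfold natRadical
  apply Finset.prod_primes_dvd
  · intro p hp
    exact (Nat.prime_of_mem_primeFactors hp).prime
  · intro p hp
    exact h p (Nat.prime_of_mem_primeFactors hp) (Nat.dvd_of_mem_primeFactors hp)

theorem dvd_natRadical (n p : ℕ) (hn : 0 < n) (hp : p.Prime) (h : p ∣ n) :
    p ∣ natRadical n := by
  unfold natRadical
  exact Finset.dvd_prod_of_mem (fun p => p) (Nat.mem_primeFactors.2 ⟨hp, h, hn.ne'⟩)

theorem natRadical_pos (n : ℕ) : 0 < natRadical n :=
  Finset.prod_pos fun _ hp => (Nat.prime_of_mem_primeFactors hp).pos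

theorem natRadical_pow_le (k n : ℕ) (hn : 0 < n) (h : IsKFull k n) :
    natRadical n ^ k ≤ n := by
  apply Nat.le_of_dvd hn
  unfold natRadical
  rw [← Finset.prod_pow]
  apply Finset.prod_dvd_of_isRelPrime
  · intro p hp q hq hpq
    exact (Nat.coprime_iff_isRelPrime.1 (((Nat.coprime_primes (Nat.prime_of_mem_primeFactors hp)
      (Nat.prime_of_mem_primeFactors hq)).2 hpq).pow k k))
  · intro p hp
    exact h p (Nat.prime_of_mem_primeFactors hp) (Nat.dvd_of_mem_primeFactors hp)

theorem natRadical_le_rpow (k n : ℕ) (hk : 0 < k) (hn : 0 < n) (h : IsKFull k n) :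
    (natRadical n : ℝ) ≤ (n : ℝ) ^ (1 / (k : ℝ)) := by
  have h1 : ((natRadical n : ℝ)) ^ k ≤ n := by exact_mod_cast natRadical_pow_le k n hn h
  have h2 : (natRadical n : ℝ) = ((natRadical n : ℝ) ^ k) ^ (1 / (k : ℝ)) := by
    rw [one_div, Real.pow_rpow_inv_natCast (by positivity) hk.ne']
  rw [h2]
  exact Real.rpow_le_rpow (by positivity) h1 (by positivity)

/-- abc applied to two `k`-full numbers `m` and `m + d`. -/
theorem abc_pair (δ C : ℝ) (hδ : 0 < δ) (hC : 0 < C)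
    (habc : ∀ a b c : ℕ, 0 < a → 0 < b → 0 < c → Nat.Coprime a b → a + b = c →
      (c : ℝ) ≤ C * (natRadical (a * b * c) : ℝ) ^ (1 + δ))
    (k m d : ℕ) (hk : 0 < k) (hm : 0 < m) (hd : 0 < d)
    (h1 : IsKFull k m) (h2 : IsKFull k (d + m)) :
    ((d + m : ℕ) : ℝ) ≤ C * ((d : ℝ) * ((d + m : ℕ) : ℝ) ^ (2 / (k : ℝ))) ^ (1 + δ) := by
  obtain ⟨g, a, b, hg, hab, rfl, rfl⟩ := Nat.exists_coprime' (m := d) (n := m) (Nat.gcd_pos_of_pos_left _ hd)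
  have ha : 0 < a := Nat.pos_of_mul_pos_right hd
  have hb : 0 < b := Nat.pos_of_mul_pos_right hm
  have key := habc a b (a + b) ha hb (by omega) hab rfl
  have e : a * g + b * g = (a + b) * g := by ring
  rw [e] at h2 ⊢
  set n1 := b * g with hn1
  set n2 := (a + b) * g with hn2
  have hn2p : 0 < n2 := by positivity
  have hn12 : n1 ≤ n2 := Nat.mul_le_mul_right _ (by omega)
  have hdv : natRadical (a * b * (a + b)) ≤ a * (natRadical n1 * natRadical n2) := by
    apply Nat.le_of_dvd (mul_pos ha (mul_pos (natRadical_pos _) (natRadical_pos _)))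
    apply natRadical_dvd_of
    intro p hp hdvd
    rcases (hp.dvd_mul).1 hdvd with h | h
    · rcases (hp.dvd_mul).1 h with h | h
      · exact Dvd.dvd.mul_right h _
      · exact Dvd.dvd.mul_left (Dvd.dvd.mul_right
          (dvd_natRadical n1 p hm hp (Dvd.dvd.mul_right h _)) _) _
    · exact Dvd.dvd.mul_left (Dvd.dvd.mul_left
          (dvd_natRadical n2 p hn2p hp (Dvd.dvd.mul_right h _)) _) _
  have hr1 : (natRadical n1 : ℝ) ≤ (n2 : ℝ) ^ (1 / (k : ℝ)) :=
    (natRadical_le_rpow k n1 hk hm h1).trans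
      (Real.rpow_le_rpow (by positivity) (by exact_mod_cast hn12) (by positivity))
  have hr2 := natRadical_le_rpow k n2 hk hn2p h2
  have hR : (n2 : ℝ) ^ (2 / (k : ℝ)) = (n2 : ℝ) ^ (1 / (k : ℝ)) * (n2 : ℝ) ^ (1 / (k : ℝ)) := by
    rw [← Real.rpow_add (by exact_mod_cast hn2p)]
    congr 1; ring
  have hrad : (natRadical (a * b * (a + b)) : ℝ) ≤ a * (n2 : ℝ) ^ (2 / (k : ℝ)) := by
    have : (natRadical (a * b * (a + b)) : ℝ) ≤ a * (natRadical n1 * natRadical n2) := by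
      exact_mod_cast hdv
    refine this.trans ?_
    rw [hR]
    gcongr
  have hgr : (1 : ℝ) ≤ g := by exact_mod_cast hg
  have hgg : (g : ℝ) ≤ (g : ℝ) ^ (1 + δ) := by
    conv_lhs => rw [← Real.rpow_one (g : ℝ)]
    exact Real.rpow_le_rpow_of_exponent_le hgr (by linarith)
  calc (n2 : ℝ) = ((a + b : ℕ) : ℝ) * g := by rw [hn2]; push_cast; ring
    _ ≤ (C * (a * (n2 : ℝ) ^ (2 / (k : ℝ))) ^ (1 + δ)) * (g : ℝ) ^ (1 + δ) := by
        apply mul_le_mul _ hgg (by positivity) (by positivity)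
        refine key.trans ?_
        gcongr
    _ = C * (((a * g : ℕ) : ℝ) * (n2 : ℝ) ^ (2 / (k : ℝ))) ^ (1 + δ) := by
        rw [mul_assoc, ← Real.mul_rpow (by positivity) (by positivity)]
        push_cast
        congr 2; ring

theorem gap_bound (habc : ABCConjecture) (k : ℕ) (hk : 3 ≤ k) (ε : ℝ) (hε : 0 < ε) :
    ∃ c : ℝ, 0 < c ∧ c ≤ 1 ∧ ∀ (y : ℝ) (m n : ℕ), 1 ≤ y → 0 < m → m < n → y ≤ n →
      IsKFull k m → IsKFull k n → c * y ^ (1 - (2 + ε) / (k : ℝ)) ≤ (n : ℝ) - m := by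
  have hk0 : (0 : ℝ) < k := by exact_mod_cast (by omega : 0 < k)
  have hδ : 0 < ε / k := by positivity
  obtain ⟨C, hC, H⟩ := habc (ε / k) hδ
  set δ := ε / k with hδd
  set s := 1 / (1 + δ) with hs
  have hCs : 0 < C ^ s := Real.rpow_pos_of_pos hC s
  refine ⟨min 1 (C ^ s)⁻¹, by positivity, min_le_left _ _, ?_⟩
  intro y m n hy hm hmn hyn h1 h2
  obtain ⟨d, rfl⟩ : ∃ d, n = d + m := ⟨n - m, by omega⟩
  have hd : 0 < d := by omega
  have hd1 : (1 : ℝ) ≤ d := by exact_mod_cast hd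
  have hsub : ((d + m : ℕ) : ℝ) - m = d := by push_cast; ring
  rw [hsub]
  have hθ : 1 - (2 + ε) / (k : ℝ) = 1 - δ - 2 / k := by rw [hδd]; ring
  have key := abc_pair δ C hδ hC H k m d (by omega) hm hd h1 h2
  set N : ℝ := ((d + m : ℕ) : ℝ) with hN
  have hN1 : 1 ≤ N := hy.trans hyn
  have hN0 : 0 < N := by linarith
  have hs0 : 0 < s := by positivity
  rcases le_total (1 - (2 + ε) / (k : ℝ)) 0 with hle | hge
  · have := Real.rpow_le_one_of_one_le_of_nonpos hy hle
    calc _ ≤ (1 : ℝ) * 1 := by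
          apply mul_le_mul (min_le_left _ _) this (by positivity) (by norm_num)
      _ ≤ d := by linarith
  · have hk1 := Real.rpow_le_rpow hN0.le key hs0.le
    rw [Real.mul_rpow hC.le (by positivity), ← Real.rpow_mul (by positivity)] at hk1
    have h11 : (1 + δ) * s = 1 := by rw [hs]; field_simp
    rw [h11, Real.rpow_one] at hk1
    have hsδ : 1 - δ ≤ s := by
      rw [hs, le_div_iff₀ (by positivity)]; nlinarith
    have h3 : N ^ (1 - δ - 2 / (k : ℝ)) * N ^ (2 / (k : ℝ)) ≤ N ^ s := by
      rw [← Real.rpow_add hN0]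
      exact Real.rpow_le_rpow_of_exponent_le hN1 (by linarith)
    have hP : 0 < N ^ (2 / (k : ℝ)) := by positivity
    have h4 : N ^ (1 - δ - 2 / (k : ℝ)) ≤ C ^ s * d := by
      refine le_of_mul_le_mul_right ?_ hP
      linarith
    have h5 : y ^ (1 - (2 + ε) / (k : ℝ)) ≤ C ^ s * d := by
      refine (Real.rpow_le_rpow (by linarith) hyn hge).trans ?_
      rw [hθ]; exact h4
    calc _ ≤ (C ^ s)⁻¹ * (C ^ s * d) := by
          apply mul_le_mul (min_le_right _ _) h5 (by positivity) (by positivity)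
      _ = d := by field_simp

theorem count_of_gap (S : Set ℕ) (x y D : ℝ) (hy : 0 ≤ y) (hD : 0 < D)
    (hS : ∀ n ∈ S, x < (n : ℝ) ∧ (n : ℝ) ≤ x + y)
    (hgap : ∀ m ∈ S, ∀ n ∈ S, m < n → D ≤ (n : ℝ) - m) :
    (S.ncard : ℝ) ≤ y / D + 1 := by
  have hinj : ∀ m ∈ S, ∀ n ∈ S, m < n → ⌊((m : ℝ) - x) / D⌋₊ ≠ ⌊((n : ℝ) - x) / D⌋₊ := by
    intro m hm n hn hmn he
    have hg := hgap m hm n hn hmn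
    have h0 : 0 ≤ ((n : ℝ) - x) / D := div_nonneg (by linarith [(hS n hn).1]) hD.le
    have h0' : 0 ≤ ((m : ℝ) - x) / D := div_nonneg (by linarith [(hS m hm).1]) hD.le
    have ha := Nat.floor_le h0'
    have hb := Nat.lt_floor_add_one (((n : ℝ) - x) / D)
    have hc := Nat.floor_le h0
    have hd := Nat.lt_floor_add_one (((m : ℝ) - x) / D)
    rw [he] at hd ha
    have : 1 ≤ ((n : ℝ) - x) / D - ((m : ℝ) - x) / D := by
      rw [← sub_div, le_div_iff₀ hD]; linarith
    linarith
  have hcard : S.ncard ≤ (Finset.range (⌊y / D⌋₊ + 1) : Set ℕ).ncard := by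
    apply Set.ncard_le_ncard_of_injOn (fun n : ℕ => ⌊((n : ℝ) - x) / D⌋₊)
    · intro n hn
      simp only [Finset.coe_range, Set.mem_Iio, Nat.lt_succ_iff]
      apply Nat.floor_le_floor
      gcongr
      linarith [(hS n hn).2]
    · intro m hm n hn he
      rcases lt_trichotomy m n with h | h | h
      · exact absurd he (hinj m hm n hn h)
      · exact h
      · exact absurd he.symm (hinj n hn m hm h)
  rw [Set.ncard_coe_finset, Finset.card_range] at hcard
  have h1 : (S.ncard : ℝ) ≤ (⌊y / D⌋₊ : ℝ) + 1 := by exact_mod_cast hcard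
  linarith [Nat.floor_le (div_nonneg hy hD.le)]


/-- Assuming the abc-conjecture, for every integer `k ≥ 3` and `ε > 0` there is a
constant `C > 0` such that for all real `x ≥ 1` and `1 ≤ y ≤ x`, the number of
`k`-full integers in `(x, x + y]` is at most `C · y^((2+ε)/k)`. -/
theorem kfull_short_interval_bound_of_abc (habc : ABCConjecture)
    (k : ℕ) (hk : 3 ≤ k) (ε : ℝ) (hε : 0 < ε) :
    ∃ C : ℝ, 0 < C ∧ ∀ x y : ℝ, 1 ≤ x → 1 ≤ y → y ≤ x →
      (({n : ℕ | x < (n : ℝ) ∧ (n : ℝ) ≤ x + y ∧ 0 < n ∧ IsKFull k n}.ncard : ℝ))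
        ≤ C * y ^ ((2 + ε) / (k : ℝ)) := by
  obtain ⟨c, hc, hc1, H⟩ := gap_bound habc k hk ε hε
  refine ⟨c⁻¹ + 1, by positivity, ?_⟩
  intro x y hx hy hyx
  have hy0 : 0 < y := by linarith
  have h := count_of_gap {n : ℕ | x < (n : ℝ) ∧ (n : ℝ) ≤ x + y ∧ 0 < n ∧ IsKFull k n} x y
    (c * y ^ (1 - (2 + ε) / (k : ℝ))) hy0.le (by positivity)
    (fun n hn => ⟨hn.1, hn.2.1⟩)
    (fun m hm n hn hmn => H y m n hy hm.2.2.1 hmn (by linarith [hn.1]) hm.2.2.2 hn.2.2.2)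
  refine h.trans ?_
  have e : y / (c * y ^ (1 - (2 + ε) / (k : ℝ))) = c⁻¹ * y ^ ((2 + ε) / (k : ℝ)) := by
    rw [Real.rpow_sub hy0, Real.rpow_one]
    have : y ^ ((2 + ε) / (k : ℝ)) ≠ 0 := by positivity
    field_simp
  rw [e]
  have h1 : 1 ≤ y ^ ((2 + ε) / (k : ℝ)) := Real.one_le_rpow hy (by positivity)
  linarith
end
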